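/- arXiv:1310.5055 — 2 statements merged into one kernel-verified Lean document; each statement's English description precedes it below -/
import Mathlib

section
/- Let F be a field of characteristic ≠ 2 and α, β, γ, δ ∈ F*. The biquaternion algebra (α,β) ⊗_F (γ,δ) is a division algebra if and only if the six-dimensional diagonal quadratic form ⟨α, β, -αβ, -γ, -δ, γδ⟩ is anisotropic over F; and if this form is isotropic then (α,β) ⊗_F (γ,δ) is Brauer-equivalent to a quaternion algebra over F. -/
open scoped Quaternion TensorProduct

/-!
Let `q` and `q'` be the forms sending a pure quaternion of `(α, β)` and of `(γ, δ)` to its square.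
The Albert form is `q ⊥ -q'`, so it is anisotropic iff `q` and `q'` are anisotropic and have no
common nonzero value.

Suppose that it is anisotropic and put `D = (α, β)`. In the tower
`D ⊆ D ⊗ F(√γ) ⊆ D ⊗ (γ, δ)` each step adjoins an element `t` with `t² = c` and `t d = τ(d) t`.
Such a step preserves the division property as soon as `τ(z) z = c` has no solution, because
`(τ(z) - t)(z + t) = τ(z) z - c`. At the first step this says that `γ` is not a square in `D`. At
the second it says that `a² - γ b² = δ` has no solution in commuting elements of `D`; such elements
are affine in a single pure quaternion `v`, and a solution would give a zero of the Albert form.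

If the Albert form is isotropic, then `q` and `q'` have a common nonzero value `a`. Completing
pure quaternions with square `a` to orthogonal pairs gives `(α, β) ≅ (a, b)` and `(γ, δ) ≅ (a, d)`,
and `(a, b) ⊗ (a, d) ≅ M₂((a, bd))`, which has zero divisors.
-/

namespace Albert

section TwistedExtension

theorem isUnit_of_forall_exists_mul_eq_one {M : Type*} [MonoidWithZero M] [Nontrivial M]
    (h : ∀ x : M, x ≠ 0 → ∃ y, y * x = 1) {x : M} (hx : x ≠ 0) : IsUnit x := by
  obtain ⟨y, hyx⟩ := h x hx
  obtain ⟨z, hzy⟩ := h y (left_ne_zero_of_mul_eq_one hyx)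
  exact isUnit_iff_exists_and_exists.2 ⟨⟨y, left_inv_eq_right_inv hzy hyx ▸ hzy⟩, y, hyx⟩

variable {D R : Type*} [Ring D] [Ring R]

theorem isUnit_of_forall_apply_mul_ne (φ : D →+* R) (τ : D →+* D) {t : R} {c : D}
    (hD : ∀ d : D, d ≠ 0 → IsUnit d) (htop : ∀ r, ∃ x y, r = φ x + φ y * t)
    (ht : ∀ d, t * φ d = φ (τ d) * t) (hc : t * t = φ c) (hτ : ∀ z, τ z * z ≠ c)
    {r : R} (hr : r ≠ 0) : IsUnit r := by
  have := nontrivial_of_ne r 0 hr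
  refine isUnit_of_forall_exists_mul_eq_one (fun r hr ↦ ?_) hr
  obtain ⟨x, y, rfl⟩ := htop r
  by_cases hy : y = 0
  · have hx : IsUnit x := hD x fun hx ↦ hr (by simp [hx, hy])
    obtain ⟨s, hs⟩ := (hx.map φ).exists_left_inv
    exact ⟨s, by simpa [hy] using hs⟩
  · obtain ⟨y', hy'⟩ := (hD y hy).exists_left_inv
    obtain ⟨n, hn⟩ := (hD _ (sub_ne_zero.2 (hτ (y' * x)))).exists_left_inv
    set z := y' * x with hz
    have hnorm : (φ (τ z) - t) * (φ z + t) = φ (τ z * z - c) := by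
      simp only [map_sub, map_mul, ← hc, sub_mul, mul_add, ht]
      abel
    refine ⟨φ n * (φ (τ z) - t) * φ y', ?_⟩
    calc φ n * (φ (τ z) - t) * φ y' * (φ x + φ y * t)
        = φ n * ((φ (τ z) - t) * (φ z + φ (y' * y) * t)) := by
          simp only [hz, map_mul, mul_add, mul_assoc]
      _ = 1 := by rw [hy', map_one, one_mul, hnorm, ← map_mul, hn, map_one]

end TwistedExtension

section TensorQuaternion

open scoped QuadraticAlgebra

variable {F D : Type*} [CommRing F] [Ring D] [Algebra F D] {γ δ : F}

theorem exists_eq_tmul_one_add_tmul_omega (x : D ⊗[F] QuadraticAlgebra F γ 0) :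
    ∃ a b : D, x = a ⊗ₜ 1 + b ⊗ₜ ω := by
  induction x with
  | zero => exact ⟨0, 0, by simp⟩
  | tmul d z =>
    refine ⟨z.re • d, z.im • d, ?_⟩
    rw [TensorProduct.smul_tmul, TensorProduct.smul_tmul, ← TensorProduct.tmul_add]
    congr 1
    ext <;> simp
  | add x y hx hy =>
    obtain ⟨a, b, rfl⟩ := hx
    obtain ⟨a', b', rfl⟩ := hy
    exact ⟨a + a', b + b', by simp only [TensorProduct.add_tmul]; abel⟩

theorem tmul_one_add_tmul_omega_inj {a b a' b' : D}
    (h : a ⊗ₜ[F] (1 : QuadraticAlgebra F γ 0) + b ⊗ₜ[F] ω =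
      a' ⊗ₜ[F] 1 + b' ⊗ₜ[F] ω) : a = a' ∧ b = b' := by
  constructor
  · simpa using
      congr(TensorProduct.rid F D ((QuadraticAlgebra.reₗ γ 0).lTensor D $h))
  · simpa using
      congr(TensorProduct.rid F D ((QuadraticAlgebra.imₗ γ 0).lTensor D $h))

theorem isUnit_tensor_quadraticAlgebra (hD : ∀ d : D, d ≠ 0 → IsUnit d)
    (hγ : ∀ a : D, a * a ≠ algebraMap F D γ) {x : D ⊗[F] QuadraticAlgebra F γ 0} (hx : x ≠ 0) :
    IsUnit x := by
  refine isUnit_of_forall_apply_mul_ne (t := 1 ⊗ₜ ω) (c := algebraMap F D γ)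
    Algebra.TensorProduct.includeLeftRingHom (RingHom.id D) hD ?_ ?_ ?_ hγ hx
  · simpa using exists_eq_tmul_one_add_tmul_omega
  · simp
  · simp [QuadraticAlgebra.omega_mul_omega_eq_algebraMap,
      Algebra.TensorProduct.tmul_one_eq_one_tmul]

variable (γ δ) in
/-- The embedding of `F(√γ)` into `(γ, δ)` sending `√γ` to the generator `i`. -/
def quadraticToQuaternion : QuadraticAlgebra F γ 0 →ₐ[F] ℍ[F,γ,δ] :=
  QuadraticAlgebra.lift ⟨⟨0, 1, 0, 0⟩, by ext <;> simp⟩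

variable (γ) in
/-- The conjugation `√γ ↦ -√γ` of `F(√γ)`. -/
def quadraticConj : QuadraticAlgebra F γ 0 →ₐ[F] QuadraticAlgebra F γ 0 :=
  QuadraticAlgebra.lift ⟨-ω, by ext <;> simp⟩

@[simp]
theorem quadraticToQuaternion_apply (z : QuadraticAlgebra F γ 0) :
    quadraticToQuaternion γ δ z = ⟨z.re, z.im, 0, 0⟩ := by
  ext <;> simp [quadraticToQuaternion, QuadraticAlgebra.lift]

@[simp]
theorem quadraticConj_omega : quadraticConj γ ω = -ω := by
  ext <;> simp [quadraticConj, QuadraticAlgebra.lift]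

theorem exists_eq_map_add_map_mul_tmul (r : D ⊗[F] ℍ[F,γ,δ]) :
    ∃ x y, r = Algebra.TensorProduct.map (.id F D) (quadraticToQuaternion γ δ) x +
      Algebra.TensorProduct.map (.id F D) (quadraticToQuaternion γ δ) y *
        (1 ⊗ₜ ⟨0, 0, 1, 0⟩) := by
  induction r with
  | zero => exact ⟨0, 0, by simp⟩
  | tmul d q =>
    refine ⟨d ⊗ₜ ⟨q.re, q.imI⟩, d ⊗ₜ ⟨q.imJ, q.imK⟩, ?_⟩
    simp [← TensorProduct.tmul_add]
  | add r s hr hs =>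
    obtain ⟨x, y, rfl⟩ := hr
    obtain ⟨x', y', rfl⟩ := hs
    exact ⟨x + x', y + y', by simp only [map_add, add_mul]; abel⟩

theorem map_quadraticConj_mul_self_ne
    (hδ : ∀ a b : D, Commute a b → a * a - γ • (b * b) ≠ algebraMap F D δ)
    (z : D ⊗[F] QuadraticAlgebra F γ 0) :
    Algebra.TensorProduct.map (.id F D) (quadraticConj γ) z * z ≠ algebraMap F _ δ := by
  intro hz
  obtain ⟨a, b, rfl⟩ := exists_eq_tmul_one_add_tmul_omega z
  have hω : (ω * ω : QuadraticAlgebra F γ 0) = γ • 1 := by ext <;> simp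
  have hnorm : (a * a - γ • (b * b)) ⊗ₜ[F] (1 : QuadraticAlgebra F γ 0) + (a * b - b * a) ⊗ₜ ω =
      algebraMap F D δ ⊗ₜ 1 + (0 : D) ⊗ₜ ω := by
    rw [TensorProduct.zero_tmul, add_zero, ← Algebra.TensorProduct.algebraMap_apply, ← hz]
    simp only [map_add, Algebra.TensorProduct.map_tmul, AlgHom.id_apply, map_one,
      quadraticConj_omega, mul_add, add_mul, Algebra.TensorProduct.tmul_mul_tmul, mul_one, one_mul,
      neg_mul, hω, TensorProduct.sub_tmul, TensorProduct.tmul_neg, TensorProduct.tmul_smul,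
      ← TensorProduct.smul_tmul']
    abel
  obtain ⟨hre, him⟩ := tmul_one_add_tmul_omega_inj hnorm
  exact hδ a b (sub_eq_zero.1 him) hre

theorem isUnit_tensor_quaternion (hD : ∀ d : D, d ≠ 0 → IsUnit d)
    (hγ : ∀ a : D, a * a ≠ algebraMap F D γ)
    (hδ : ∀ a b : D, Commute a b → a * a - γ • (b * b) ≠ algebraMap F D δ)
    {x : D ⊗[F] ℍ[F,γ,δ]} (hx : x ≠ 0) : IsUnit x := by
  refine isUnit_of_forall_apply_mul_ne (t := 1 ⊗ₜ ⟨0, 0, 1, 0⟩) (c := algebraMap F _ δ)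
    (Algebra.TensorProduct.map (.id F D) (quadraticToQuaternion γ δ)).toRingHom
    (Algebra.TensorProduct.map (.id F D) (quadraticConj γ)).toRingHom
    (fun _ ↦ isUnit_tensor_quadraticAlgebra hD hγ) exists_eq_map_add_map_mul_tmul ?_ ?_
    (map_quadraticConj_mul_self_ne hδ) hx
  · intro z
    obtain ⟨a, b, rfl⟩ := exists_eq_tmul_one_add_tmul_omega z
    simp [mul_add, add_mul]
  · have hj : (⟨0, 0, 1, 0⟩ : ℍ[F,γ,δ]) * ⟨0, 0, 1, 0⟩ = algebraMap F _ δ := by ext <;> simp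
    simp only [AlgHom.toRingHom_eq_coe, RingHom.coe_coe, AlgHom.commutes, hj,
      Algebra.TensorProduct.tmul_mul_tmul, mul_one, ← Algebra.TensorProduct.algebraMap_apply']

end TensorQuaternion

section PureQuaternion

variable {F : Type*} [CommRing F] {α β : F}

/-- The quadratic form `⟨α, β, -αβ⟩`, which takes a pure quaternion of `(α, β)`, written in the
coordinates with respect to `i`, `j`, `k`, to its square. -/
def pureForm (α β : F) : QuadraticForm F (Fin 3 → F) :=
  QuadraticMap.weightedSumSquares F ![α, β, -(α * β)]

theorem pureForm_apply (v : Fin 3 → F) :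
    pureForm α β v = α * (v 0 * v 0) + β * (v 1 * v 1) - α * β * (v 2 * v 2) := by
  simp [pureForm, QuadraticMap.weightedSumSquares_apply, Fin.sum_univ_three, sub_eq_add_neg]

theorem polar_weightedSumSquares {ι R : Type*} [Fintype ι] [CommRing R] (w u v : ι → R) :
    QuadraticMap.polar (QuadraticMap.weightedSumSquares R w) u v = ∑ i, 2 * w i * (u i * v i) := by
  simp only [QuadraticMap.polar, QuadraticMap.weightedSumSquares_apply, ← Finset.sum_sub_distrib]
  refine Finset.sum_congr rfl fun i _ ↦ ?_
  simp only [Pi.add_apply, smul_eq_mul]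
  ring

theorem polar_pureForm (v w : Fin 3 → F) : QuadraticMap.polar (pureForm α β) v w =
    2 * (α * (v 0 * w 0) + β * (v 1 * w 1) - α * β * (v 2 * w 2)) := by
  simp only [pureForm, polar_weightedSumSquares, Fin.sum_univ_three, Matrix.cons_val]
  ring

variable (α β) in
/-- The pure quaternion of `(α, β)` with given coordinates with respect to `i`, `j`, `k`. -/
def pureQuaternion : (Fin 3 → F) →ₗ[F] ℍ[F,α,β] where
  toFun v := ⟨0, v 0, v 1, v 2⟩
  map_add' v w := by ext <;> simp
  map_smul' c v := by ext <;> simp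

theorem pureQuaternion_apply (v : Fin 3 → F) : pureQuaternion α β v = ⟨0, v 0, v 1, v 2⟩ := rfl

theorem pureQuaternion_mul_self (v : Fin 3 → F) :
    pureQuaternion α β v * pureQuaternion α β v = algebraMap F _ (pureForm α β v) := by
  ext <;> simp [pureQuaternion_apply, pureForm_apply] <;> ring

theorem pureQuaternion_mul_add_mul (v w : Fin 3 → F) :
    pureQuaternion α β v * pureQuaternion α β w + pureQuaternion α β w * pureQuaternion α β v =
      algebraMap F _ (QuadraticMap.polar (pureForm α β) v w) := by
  simp only [QuadraticMap.polar, map_sub, ← pureQuaternion_mul_self, map_add, mul_add, add_mul]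
  abel

theorem pureQuaternion_mul_sub_mul (v w : Fin 3 → F) :
    pureQuaternion α β v * pureQuaternion α β w - pureQuaternion α β w * pureQuaternion α β v =
      pureQuaternion α β (![-(2 * β), -(2 * α), 2] * crossProduct v w) := by
  ext <;> simp [pureQuaternion_apply, cross_apply] <;> ring

theorem algebraMap_add_pureQuaternion_mul_self (a : F) (v : Fin 3 → F) :
    (algebraMap F ℍ[F,α,β] a + pureQuaternion α β v) *
        (algebraMap F _ a + pureQuaternion α β v) =
      algebraMap F _ (a * a + pureForm α β v) + pureQuaternion α β ((2 * a) • v) := by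
  ext <;> simp [pureQuaternion_apply, pureForm_apply] <;> ring

theorem eq_algebraMap_add_pureQuaternion (q : ℍ[F,α,β]) :
    q = algebraMap F _ q.re + pureQuaternion α β ![q.imI, q.imJ, q.imK] := by
  ext <;> simp [pureQuaternion_apply]

theorem algebraMap_add_pureQuaternion_inj {a b : F} {v w : Fin 3 → F} :
    algebraMap F ℍ[F,α,β] a + pureQuaternion α β v = algebraMap F _ b + pureQuaternion α β w ↔
      a = b ∧ v = w := by
  refine ⟨fun h ↦ ?_, fun ⟨ha, hv⟩ ↦ by rw [ha, hv]⟩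
  simpa [QuaternionAlgebra.ext_iff, pureQuaternion_apply, funext_iff, Fin.forall_fin_succ] using h

/-- The generators of `(α, β)` given by two orthogonal pure quaternions. -/
def orthogonalBasis {v w : Fin 3 → F} (h : QuadraticMap.polar (pureForm α β) v w = 0) :
    QuaternionAlgebra.Basis ℍ[F,α,β] (pureForm α β v) 0 (pureForm α β w) where
  i := pureQuaternion α β v
  j := pureQuaternion α β w
  k := pureQuaternion α β v * pureQuaternion α β w
  i_mul_i := by simp [pureQuaternion_mul_self, Algebra.algebraMap_eq_smul_one]
  j_mul_j := by simp [pureQuaternion_mul_self, Algebra.algebraMap_eq_smul_one]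
  i_mul_j := rfl
  j_mul_i := by
    rw [zero_smul, zero_sub, eq_neg_iff_add_eq_zero, add_comm, pureQuaternion_mul_add_mul, h,
      map_zero]

end PureQuaternion

section Commute

variable {F : Type*} [Field F] {α β : F}

theorem exists_eq_smul_of_crossProduct_eq_zero {v w : Fin 3 → F} (h : crossProduct v w = 0) :
    ∃ (e : Fin 3 → F) (s t : F), v = s • e ∧ w = t • e := by
  by_cases hv : v = 0
  · exact ⟨w, 0, 1, by simp [hv], by simp⟩
  · have hvw : ¬ LinearIndependent F ![v, w] := by
      rwa [← crossProduct_ne_zero_iff_linearIndependent, not_not]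
    rw [LinearIndependent.pair_iff' hv] at hvw
    push Not at hvw
    obtain ⟨t, ht⟩ := hvw
    exact ⟨v, 1, t, by simp, ht.symm⟩

theorem crossProduct_eq_zero_of_commute (hF : (2 : F) ≠ 0) (hα : α ≠ 0) (hβ : β ≠ 0)
    {v w : Fin 3 → F} (h : Commute (pureQuaternion α β v) (pureQuaternion α β w)) :
    crossProduct v w = 0 := by
  have hcomm := pureQuaternion_mul_sub_mul (α := α) (β := β) v w
  rw [h.eq, sub_self] at hcomm
  simpa [QuaternionAlgebra.ext_iff, pureQuaternion_apply, funext_iff, Fin.forall_fin_succ, hF, hα,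
    hβ] using hcomm.symm

theorem exists_eq_algebraMap_add_smul_of_commute (hF : (2 : F) ≠ 0) (hα : α ≠ 0) (hβ : β ≠ 0)
    {p q : ℍ[F,α,β]} (h : Commute p q) :
    ∃ (v : Fin 3 → F) (a s b t : F), p = algebraMap F _ a + pureQuaternion α β (s • v) ∧
      q = algebraMap F _ b + pureQuaternion α β (t • v) := by
  have hpq : Commute (pureQuaternion α β ![p.imI, p.imJ, p.imK])
      (pureQuaternion α β ![q.imI, q.imJ, q.imK]) := by
    rw [eq_sub_of_add_eq' (eq_algebraMap_add_pureQuaternion p).symm,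
      eq_sub_of_add_eq' (eq_algebraMap_add_pureQuaternion q).symm]
    exact (h.sub_left (Algebra.commute_algebraMap_left _ _)).sub_right
      (Algebra.commute_algebraMap_right _ _)
  obtain ⟨v, s, t, hs, ht⟩ := exists_eq_smul_of_crossProduct_eq_zero
    (crossProduct_eq_zero_of_commute hF hα hβ hpq)
  exact ⟨v, p.re, s, q.re, t, hs ▸ eq_algebraMap_add_pureQuaternion p,
    ht ▸ eq_algebraMap_add_pureQuaternion q⟩

end Commute

section AlbertForm

variable {F : Type*} [CommRing F] {α β γ δ : F}

/-- The Albert form of the biquaternion algebra `(α, β) ⊗ (γ, δ)`. -/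
def albertForm (α β γ δ : F) : QuadraticForm F (Fin 6 → F) :=
  QuadraticMap.weightedSumSquares F
    (fun i : Fin 6 => [α, β, -(α * β), -γ, -δ, γ * δ].get i)

theorem albertForm_apply (x : Fin 6 → F) :
    albertForm α β γ δ x = pureForm α β ![x 0, x 1, x 2] - pureForm γ δ ![x 3, x 4, x 5] := by
  simp only [albertForm, QuadraticMap.weightedSumSquares_apply, pureForm_apply, Fin.sum_univ_six,
    smul_eq_mul, Matrix.cons_val, List.get_eq_getElem, List.length_cons, List.length_nil,
    Nat.reduceAdd, Fin.coe_ofNat_eq_mod, Nat.reduceMod, List.getElem_cons_zero,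
    List.getElem_cons_succ]
  ring

theorem albertForm_anisotropic_iff : (albertForm α β γ δ).Anisotropic ↔
    ∀ v w, pureForm α β v = pureForm γ δ w → v = 0 ∧ w = 0 := by
  refine ⟨fun h v w hvw ↦ ?_, fun h x hx ↦ ?_⟩
  · have hx := h ![v 0, v 1, v 2, w 0, w 1, w 2] <| by
      simpa [albertForm_apply, pureForm_apply, sub_eq_zero] using hvw
    simpa [funext_iff, Fin.forall_fin_succ, and_assoc] using hx
  · obtain ⟨hv, hw⟩ := h _ _ (sub_eq_zero.1 ((albertForm_apply x).symm.trans hx))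
    simpa [funext_iff, Fin.forall_fin_succ, and_assoc] using And.intro hv hw

theorem pureForm_anisotropic_left (h : (albertForm α β γ δ).Anisotropic) :
    (pureForm α β).Anisotropic := fun v hv ↦
  (albertForm_anisotropic_iff.1 h v 0 (by simpa using hv)).1

theorem pureForm_anisotropic_right (h : (albertForm α β γ δ).Anisotropic) :
    (pureForm γ δ).Anisotropic := fun w hw ↦
  (albertForm_anisotropic_iff.1 h 0 w (by simpa using hw.symm)).2

theorem sq_ne_of_pureForm_anisotropic [Nontrivial F] (h : (pureForm γ δ).Anisotropic) (a : F) :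
    a * a ≠ γ := by
  intro ha
  have hv : pureForm γ δ ![0, a, 1] = 0 := by
    simp only [pureForm_apply, Matrix.cons_val]
    linear_combination δ * ha
  simpa using congr_fun (h _ hv) 2

theorem norm_ne_of_pureForm_anisotropic [Nontrivial F] (h : (pureForm γ δ).Anisotropic) (a b : F) :
    a * a - γ * (b * b) ≠ δ := by
  intro hab
  have hv : pureForm γ δ ![δ, γ * b, a] = 0 := by
    simp only [pureForm_apply, Matrix.cons_val]
    linear_combination -γ * δ * hab
  have hδ : δ = 0 := by simpa using congr_fun (h _ hv) 0
  simpa using congr_fun (h ![0, 1, 0] (by simp [pureForm_apply, hδ])) 1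

theorem sq_mul_eq_of_mul_self_sub_eq {a s b t c : F}
    (hre : a * a + s * s * c - γ * (b * b + t * t * c) = δ) (him : a * s = γ * (b * t)) :
    (s * s - γ * (t * t)) ^ 2 * c =
      γ * (b * s - a * t) ^ 2 + δ * s ^ 2 - γ * δ * t ^ 2 := by
  linear_combination (s * s - γ * (t * t)) * hre - (a * s - γ * (b * t)) * him

end AlbertForm

section Anisotropic

variable {F : Type*} [Field F] {α β γ δ : F}

theorem isUnit_of_pureForm_anisotropic (h : (pureForm α β).Anisotropic) {q : ℍ[F,α,β]}
    (hq : q ≠ 0) : IsUnit q := by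
  let e := Algebra.TensorProduct.lid F ℍ[F,α,β]
  suffices IsUnit (e.symm q) by simpa using this.map e
  refine isUnit_tensor_quaternion (fun d hd ↦ hd.isUnit) ?_ ?_ (by simpa using hq)
  · simpa using sq_ne_of_pureForm_anisotropic h
  · simpa using fun a b _ ↦ norm_ne_of_pureForm_anisotropic h a b

theorem mul_self_ne_of_albertForm_anisotropic (hF : (2 : F) ≠ 0)
    (h : (albertForm α β γ δ).Anisotropic) (q : ℍ[F,α,β]) : q * q ≠ algebraMap F _ γ := by
  intro hq
  obtain ⟨a, v, rfl⟩ : ∃ a v, q = algebraMap F _ a + pureQuaternion α β v :=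
    ⟨_, _, eq_algebraMap_add_pureQuaternion q⟩
  obtain ⟨hre, him⟩ : a * a + pureForm α β v = γ ∧ (2 * a) • v = 0 := by
    rwa [← algebraMap_add_pureQuaternion_inj, ← algebraMap_add_pureQuaternion_mul_self, map_zero,
      add_zero]
  rcases smul_eq_zero.1 him with ha | rfl
  · have hv : pureForm α β v = pureForm γ δ ![1, 0, 0] := by
      simpa [(mul_eq_zero.1 ha).resolve_left hF, pureForm_apply (α := γ)] using hre
    simpa using congr_fun (albertForm_anisotropic_iff.1 h _ _ hv).2 0
  · exact sq_ne_of_pureForm_anisotropic (pureForm_anisotropic_right h) a (by simpa using hre)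

theorem mul_self_sub_ne_of_albertForm_anisotropic (hF : (2 : F) ≠ 0) (hα : α ≠ 0) (hβ : β ≠ 0)
    (h : (albertForm α β γ δ).Anisotropic) {p q : ℍ[F,α,β]} (hpq : Commute p q) :
    p * p - γ • (q * q) ≠ algebraMap F _ δ := by
  intro hδ
  obtain ⟨v, a, s, b, t, rfl, rfl⟩ := exists_eq_algebraMap_add_smul_of_commute hF hα hβ hpq
  obtain ⟨hre, him⟩ : a * a + s * s * pureForm α β v - γ * (b * b + t * t * pureForm α β v) = δ ∧
      (2 * (a * s - γ * (b * t))) • v = 0 := by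
    rw [← algebraMap_add_pureQuaternion_inj (α := α) (β := β), map_zero, add_zero, ← hδ,
      algebraMap_add_pureQuaternion_mul_self, algebraMap_add_pureQuaternion_mul_self,
      QuadraticMap.map_smul, QuadraticMap.map_smul]
    simp only [Algebra.algebraMap_eq_smul_one, map_smul]
    module
  have hvst : v = 0 ∨ s = 0 ∧ t = 0 := by
    refine or_iff_not_imp_left.2 fun hv ↦ ?_
    have him : a * s = γ * (b * t) := by simpa [hF, hv, sub_eq_zero] using him
    have hform : pureForm α β ((s * s - γ * (t * t)) • v) =
        pureForm γ δ ![b * s - a * t, s, t] := by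
      rw [QuadraticMap.map_smul, smul_eq_mul, ← sq, sq_mul_eq_of_mul_self_sub_eq hre him]
      simp [pureForm_apply, sq]
    have hw := (albertForm_anisotropic_iff.1 h _ _ hform).2
    exact ⟨congr_fun hw 1, congr_fun hw 2⟩
  have hab : a * a - γ * (b * b) = δ := by
    rcases hvst with rfl | ⟨rfl, rfl⟩ <;> simpa using hre
  exact norm_ne_of_pureForm_anisotropic (pureForm_anisotropic_right h) a b hab

theorem isUnit_of_albertForm_anisotropic (hF : (2 : F) ≠ 0) (hα : α ≠ 0) (hβ : β ≠ 0)
    (h : (albertForm α β γ δ).Anisotropic) {x : ℍ[F,α,β] ⊗[F] ℍ[F,γ,δ]} (hx : x ≠ 0) : IsUnit x :=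
  isUnit_tensor_quaternion
    (fun _ ↦ isUnit_of_pureForm_anisotropic (pureForm_anisotropic_left h))
    (mul_self_ne_of_albertForm_anisotropic hF h)
    (fun _ _ ↦ mul_self_sub_ne_of_albertForm_anisotropic hF hα hβ h) hx

end Anisotropic

section Isotropic

variable {F : Type*} [Field F] {α β γ δ : F}

theorem exists_apply_eq_of_polar_ne_zero {K V : Type*} [Field K] [AddCommGroup V] [Module K V]
    (Q : QuadraticForm K V) {v w : V} (hv : Q v = 0) (hvw : QuadraticMap.polar Q v w ≠ 0) (a : K) :
    ∃ x, Q x = a := by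
  refine ⟨((a - Q w) / QuadraticMap.polar Q v w) • v + w, ?_⟩
  rw [QuadraticMap.map_add Q, QuadraticMap.map_smul, hv, QuadraticMap.polar_smul_left, smul_eq_mul,
    smul_eq_mul, div_mul_cancel₀ _ hvw]
  ring

theorem weightedSumSquares_exists_apply_eq {ι K : Type*} [Fintype ι] [Field K]
    (hK : (2 : K) ≠ 0) {w : ι → K} (hw : ∀ i, w i ≠ 0)
    (h : ¬ (QuadraticMap.weightedSumSquares K w).Anisotropic) (a : K) :
    ∃ v, QuadraticMap.weightedSumSquares K w v = a := by
  classical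
  simp only [QuadraticMap.Anisotropic, not_forall] at h
  obtain ⟨v, hv, hv0⟩ := h
  obtain ⟨i, hi⟩ := Function.ne_iff.1 hv0
  refine exists_apply_eq_of_polar_ne_zero _ hv (w := Pi.single i 1) ?_ a
  simpa [polar_weightedSumSquares, Pi.single_apply, hK, hw i] using hi

theorem pureForm_exists_apply_eq (hF : (2 : F) ≠ 0) (hα : α ≠ 0) (hβ : β ≠ 0)
    (h : ¬ (pureForm α β).Anisotropic) (a : F) : ∃ v, pureForm α β v = a :=
  weightedSumSquares_exists_apply_eq hF (by simp [Fin.forall_fin_succ, hα, hβ]) h a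

theorem exists_pureForm_eq_pureForm_ne_zero (hF : (2 : F) ≠ 0) (hα : α ≠ 0) (hβ : β ≠ 0)
    (hγ : γ ≠ 0) (hδ : δ ≠ 0) (h : ¬ (albertForm α β γ δ).Anisotropic) :
    ∃ v w, pureForm α β v = pureForm γ δ w ∧ pureForm α β v ≠ 0 := by
  by_cases hl : (pureForm α β).Anisotropic
  · by_cases hr : (pureForm γ δ).Anisotropic
    · rw [albertForm_anisotropic_iff] at h
      push Not at h
      obtain ⟨v, w, hvw, hne⟩ := h
      exact ⟨v, w, hvw, fun hv ↦ hne (hl v hv) (hr w (hvw ▸ hv))⟩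
    · obtain ⟨w, hw⟩ := pureForm_exists_apply_eq hF hγ hδ hr α
      have hv : pureForm α β ![1, 0, 0] = α := by simp [pureForm_apply]
      exact ⟨_, w, hv.trans hw.symm, by rwa [hv]⟩
  · obtain ⟨v, hv⟩ := pureForm_exists_apply_eq hF hα hβ hl γ
    have hw : pureForm γ δ ![1, 0, 0] = γ := by simp [pureForm_apply]
    exact ⟨v, _, hv.trans hw.symm, hv.symm ▸ hγ⟩

theorem exists_polar_eq_zero_pureForm_ne_zero (hF : (2 : F) ≠ 0) (hα : α ≠ 0) (hβ : β ≠ 0)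
    {v : Fin 3 → F} (hv : pureForm α β v ≠ 0) :
    ∃ w, QuadraticMap.polar (pureForm α β) v w = 0 ∧ pureForm α β w ≠ 0 := by
  by_contra! h
  -- The cross products of the gradient of the form at `v` with the coordinate vectors.
  have h₀₁ := h ![β * v 1, -(α * v 0), 0]
    (by rw [polar_pureForm]; simp only [Matrix.cons_val]; ring)
  have h₀₂ := h ![β * v 2, 0, v 0] (by rw [polar_pureForm]; simp only [Matrix.cons_val]; ring)
  have h₁₂ := h ![0, α * v 2, v 1] (by rw [polar_pureForm]; simp only [Matrix.cons_val]; ring)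
  simp only [pureForm_apply, Matrix.cons_val] at h₀₁ h₀₂ h₁₂
  refine hv (mul_left_cancel₀ (mul_ne_zero (mul_ne_zero hF hα) hβ) ?_)
  rw [pureForm_apply]
  linear_combination h₀₁ - α * h₀₂ - β * h₁₂

end Isotropic

section Injectivity

variable {F B C : Type*} [Field F] [Ring B] [Algebra F B] {α β : F}

theorem average_eq_four_mul_re_smul_one (hα : α ≠ 0) (hβ : β ≠ 0) (q : ℍ[F,α,β]) :
    q + α⁻¹ • (⟨0, 1, 0, 0⟩ * q * ⟨0, 1, 0, 0⟩) + β⁻¹ • (⟨0, 0, 1, 0⟩ * q * ⟨0, 0, 1, 0⟩) -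
      (α * β)⁻¹ • (⟨0, 0, 0, 1⟩ * q * ⟨0, 0, 0, 1⟩) = (4 * q.re) • 1 := by
  ext <;> simp <;> field_simp <;> ring

theorem re_smul_one_add_re_mul_smul (hα : α ≠ 0) (hβ : β ≠ 0) (q : ℍ[F,α,β]) :
    q.re • 1 + (α⁻¹ * (q * ⟨0, 1, 0, 0⟩).re) • ⟨0, 1, 0, 0⟩ +
      (β⁻¹ * (q * ⟨0, 0, 1, 0⟩).re) • ⟨0, 0, 1, 0⟩ -
      ((α * β)⁻¹ * (q * ⟨0, 0, 0, 1⟩).re) • ⟨0, 0, 0, 1⟩ = q := by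
  ext <;> simp <;> field_simp

variable (B α β) in
/-- The `B`-valued real part of an element of `B ⊗ (α, β)`. -/
noncomputable def tensorRe : B ⊗[F] ℍ[F,α,β] →ₗ[F] B :=
  TensorProduct.rid F B ∘ₗ (QuaternionAlgebra.reₗ α 0 β).lTensor B

@[simp]
theorem tensorRe_tmul (b : B) (q : ℍ[F,α,β]) : tensorRe B α β (b ⊗ₜ q) = q.re • b := by
  simp [tensorRe]

theorem average_eq_four_smul_tensorRe_tmul_one (hα : α ≠ 0) (hβ : β ≠ 0) (x : B ⊗[F] ℍ[F,α,β]) :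
    x + α⁻¹ • ((1 ⊗ₜ ⟨0, 1, 0, 0⟩) * x * (1 ⊗ₜ ⟨0, 1, 0, 0⟩)) +
      β⁻¹ • ((1 ⊗ₜ ⟨0, 0, 1, 0⟩) * x * (1 ⊗ₜ ⟨0, 0, 1, 0⟩)) -
      (α * β)⁻¹ • ((1 ⊗ₜ ⟨0, 0, 0, 1⟩) * x * (1 ⊗ₜ ⟨0, 0, 0, 1⟩)) =
      ((4 : F) • tensorRe B α β x) ⊗ₜ 1 := by
  induction x with
  | zero => simp
  | tmul b q =>
    simp only [Algebra.TensorProduct.tmul_mul_tmul, one_mul, mul_one, ← TensorProduct.tmul_smul,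
      ← TensorProduct.tmul_add, ← TensorProduct.tmul_sub, average_eq_four_mul_re_smul_one hα hβ,
      tensorRe_tmul, smul_smul, TensorProduct.smul_tmul]
  | add x y hx hy =>
    rw [map_add, smul_add, TensorProduct.add_tmul, ← hx, ← hy]
    simp only [mul_add, add_mul, smul_add]
    abel

theorem tensorRe_tmul_one_add_tensorRe_mul_tmul (hα : α ≠ 0) (hβ : β ≠ 0)
    (x : B ⊗[F] ℍ[F,α,β]) :
    tensorRe B α β x ⊗ₜ 1 +
      (α⁻¹ • tensorRe B α β (x * (1 ⊗ₜ ⟨0, 1, 0, 0⟩))) ⊗ₜ ⟨0, 1, 0, 0⟩ +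
      (β⁻¹ • tensorRe B α β (x * (1 ⊗ₜ ⟨0, 0, 1, 0⟩))) ⊗ₜ ⟨0, 0, 1, 0⟩ -
      ((α * β)⁻¹ • tensorRe B α β (x * (1 ⊗ₜ ⟨0, 0, 0, 1⟩))) ⊗ₜ ⟨0, 0, 0, 1⟩ = x := by
  induction x with
  | zero => simp
  | tmul b q =>
    simp only [Algebra.TensorProduct.tmul_mul_tmul, mul_one, tensorRe_tmul, smul_smul,
      TensorProduct.smul_tmul, ← TensorProduct.tmul_add, ← TensorProduct.tmul_sub,
      re_smul_one_add_re_mul_smul hα hβ]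
  | add x y hx hy =>
    conv_rhs => rw [← hx, ← hy]
    simp only [add_mul, map_add, smul_add, TensorProduct.add_tmul]
    abel

theorem injective_of_injective_comp_includeLeft [Ring C] (hF : (2 : F) ≠ 0) (hα : α ≠ 0)
    (hβ : β ≠ 0) (f : B ⊗[F] ℍ[F,α,β] →+* C)
    (hf : Function.Injective (f.comp Algebra.TensorProduct.includeLeftRingHom)) :
    Function.Injective f := by
  have map_smul_eq_zero (c : F) {x : B ⊗[F] ℍ[F,α,β]} (hx : f x = 0) : f (c • x) = 0 := by
    rw [← one_mul x, ← smul_mul_assoc, map_mul, hx, mul_zero]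
  have tensorRe_eq_zero {x : B ⊗[F] ℍ[F,α,β]} (hx : f x = 0) : tensorRe B α β x = 0 := by
    have h4 : (4 : F) ≠ 0 := by rw [← two_add_two_eq_four, ← two_mul]; exact mul_ne_zero hF hF
    refine (smul_eq_zero.1 ((injective_iff_map_eq_zero _).1 hf _ ?_)).resolve_left h4
    rw [RingHom.comp_apply, Algebra.TensorProduct.includeLeftRingHom_apply,
      ← average_eq_four_smul_tensorRe_tmul_one hα hβ]
    simp [map_smul_eq_zero, hx]
  refine (injective_iff_map_eq_zero f).2 fun x hx ↦ ?_
  rw [← tensorRe_tmul_one_add_tensorRe_mul_tmul hα hβ x]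
  simp [tensorRe_eq_zero, hx]

theorem quaternionAlgebra_hom_injective [Ring C] [Nontrivial C] (hF : (2 : F) ≠ 0) (hα : α ≠ 0)
    (hβ : β ≠ 0) (f : ℍ[F,α,β] →+* C) : Function.Injective f := by
  let e := (Algebra.TensorProduct.lid F ℍ[F,α,β]).toRingEquiv
  have h := injective_of_injective_comp_includeLeft hF hα hβ (f.comp e.toRingHom)
    (RingHom.injective _)
  simpa using h.comp e.symm.injective

theorem tensor_quaternionAlgebra_hom_injective [Ring C] [Nontrivial C] {γ δ : F}
    (hF : (2 : F) ≠ 0) (hα : α ≠ 0) (hβ : β ≠ 0) (hγ : γ ≠ 0) (hδ : δ ≠ 0)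
    (f : ℍ[F,α,β] ⊗[F] ℍ[F,γ,δ] →+* C) : Function.Injective f :=
  injective_of_injective_comp_includeLeft hF hγ hδ f (quaternionAlgebra_hom_injective hF hα hβ _)

theorem bijective_of_injective_of_finrank_eq [Ring C] [Algebra F C] [FiniteDimensional F B]
    [FiniteDimensional F C] {f : B →ₐ[F] C} (hf : Function.Injective f)
    (h : Module.finrank F B = Module.finrank F C) :
    Function.Bijective f :=
  ⟨hf, (LinearMap.injective_iff_surjective_of_finrank_eq_finrank (f := f.toLinearMap) h).1 hf⟩

theorem nonempty_algEquiv_quaternionAlgebra {a b : F} (hF : (2 : F) ≠ 0) (ha : a ≠ 0)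
    (hb : b ≠ 0) (p : QuaternionAlgebra.Basis ℍ[F,α,β] a 0 b) :
    Nonempty (ℍ[F,a,b] ≃ₐ[F] ℍ[F,α,β]) :=
  ⟨.ofBijective p.liftHom <| bijective_of_injective_of_finrank_eq
    (quaternionAlgebra_hom_injective hF ha hb p.liftHom.toRingHom) <| by
      simp only [QuaternionAlgebra.finrank_eq_four]⟩

end Injectivity

section CommonSlot

variable {F : Type*} [Field F] {a b d : F}

theorem commute_liftHom {R B : Type*} [CommRing R] [Ring B] [Algebra R B] {a b c d e f : R}
    (p : QuaternionAlgebra.Basis B a b c) (q : QuaternionAlgebra.Basis B d e f)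
    (hii : Commute p.i q.i) (hij : Commute p.i q.j) (hji : Commute p.j q.i)
    (hjj : Commute p.j q.j) (x : ℍ[R,a,b,c]) (y : ℍ[R,d,e,f]) :
    Commute (p.liftHom x) (q.liftHom y) := by
  have hx : p.liftHom x ∈ Algebra.adjoin R {p.i, p.j, p.k} :=
    p.range_liftHom ▸ AlgHom.mem_range_self _ x
  have hy : q.liftHom y ∈ Algebra.adjoin R {q.i, q.j, q.k} :=
    q.range_liftHom ▸ AlgHom.mem_range_self _ y
  refine Algebra.commute_of_mem_adjoin_of_forall_mem_commute hy fun s hs ↦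
    (Algebra.commute_of_mem_adjoin_of_forall_mem_commute hx fun t ht ↦ ?_).symm
  simp only [Set.mem_insert_iff, Set.mem_singleton_iff] at hs ht
  rcases hs with rfl | rfl | rfl <;> rcases ht with rfl | rfl | rfl <;>
    simp only [← p.i_mul_j, ← q.i_mul_j, Commute.mul_left, Commute.mul_right, hii.symm, hij.symm,
      hji.symm, hjj.symm]

/-- The generators of the first factor of `(a, b) ⊗ (a, d)` in `M₂((a, bd))`. The matrices come
from the decomposition `(a, b) ⊗ (a, d) ≅ (a, bd) ⊗ (a², d)`, where the scalar matrices `i` and `j`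
represent `i ⊗ 1` and `j ⊗ j`, and the matrices `diag(a, -a)` and `!![0, d; 1, 0]` represent `i ⊗ i`
and `1 ⊗ j`. -/
def commonSlotBasisLeft (a b : F) (hd : d ≠ 0) :
    QuaternionAlgebra.Basis (Matrix (Fin 2) (Fin 2) ℍ[F,a,b * d]) a 0 b where
  i := !![⟨0, 1, 0, 0⟩, 0; 0, ⟨0, 1, 0, 0⟩]
  j := !![0, ⟨0, 0, 1, 0⟩; ⟨0, 0, d⁻¹, 0⟩, 0]
  k := !![0, ⟨0, 0, 0, 1⟩; ⟨0, 0, 0, d⁻¹⟩, 0]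
  i_mul_i := by ext i j <;> fin_cases i <;> fin_cases j <;> simp
  j_mul_j := by ext i j <;> fin_cases i <;> fin_cases j <;> simp [hd]
  i_mul_j := by ext i j <;> fin_cases i <;> fin_cases j <;> simp
  j_mul_i := by ext i j <;> fin_cases i <;> fin_cases j <;> simp

/-- The generators of the second factor of `(a, b) ⊗ (a, d)` in `M₂((a, bd))`, matching
`commonSlotBasisLeft`. -/
def commonSlotBasisRight (a b d : F) :
    QuaternionAlgebra.Basis (Matrix (Fin 2) (Fin 2) ℍ[F,a,b * d]) a 0 d where
  i := !![⟨0, 1, 0, 0⟩, 0; 0, ⟨0, -1, 0, 0⟩]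
  j := !![0, ⟨d, 0, 0, 0⟩; 1, 0]
  k := !![0, ⟨0, d, 0, 0⟩; ⟨0, -1, 0, 0⟩, 0]
  i_mul_i := by ext i j <;> fin_cases i <;> fin_cases j <;> simp
  j_mul_j := by ext i j <;> fin_cases i <;> fin_cases j <;> simp
  i_mul_j := by ext i j <;> fin_cases i <;> fin_cases j <;> simp
  j_mul_i := by ext i j <;> fin_cases i <;> fin_cases j <;> simp

theorem commute_commonSlotBasis (hd : d ≠ 0) (x : ℍ[F,a,b]) (y : ℍ[F,a,d]) :
    Commute ((commonSlotBasisLeft a b hd).liftHom x) ((commonSlotBasisRight a b d).liftHom y) := by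
  apply commute_liftHom <;> rw [commute_iff_eq] <;> ext i j <;> fin_cases i <;> fin_cases j <;>
    simp [commonSlotBasisLeft, commonSlotBasisRight, hd]

theorem nonempty_tensor_algEquiv_matrix_of_common_slot (hF : (2 : F) ≠ 0) (ha : a ≠ 0)
    (hb : b ≠ 0) (hd : d ≠ 0) :
    Nonempty (ℍ[F,a,b] ⊗[F] ℍ[F,a,d] ≃ₐ[F] Matrix (Fin 2) (Fin 2) ℍ[F,a,b * d]) := by
  let f := Algebra.TensorProduct.lift _ _ (commute_commonSlotBasis (a := a) (b := b) hd)
  have hf := tensor_quaternionAlgebra_hom_injective hF ha hb ha hd f.toRingHom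
  exact ⟨.ofBijective f <| bijective_of_injective_of_finrank_eq hf <| by
    simp [Module.finrank_matrix, QuaternionAlgebra.finrank_eq_four]⟩

end CommonSlot

section Criterion

variable {F : Type*} [Field F] {α β γ δ : F}

theorem exists_ne_zero_not_isUnit_matrix {m R : Type*} [Fintype m] [DecidableEq m] [Nontrivial m]
    [Ring R] [Nontrivial R] : ∃ M : Matrix m m R, M ≠ 0 ∧ ¬ IsUnit M := by
  obtain ⟨i, j, hij⟩ := exists_pair_ne m
  have hne : Matrix.single i j (1 : R) ≠ 0 := fun h ↦ by simpa using congr_fun₂ h i j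
  have hsq : Matrix.single i j (1 : R) * Matrix.single i j 1 = 0 := by simp [hij.symm]
  exact ⟨_, hne, fun h ↦ hne (h.mul_right_eq_zero.1 hsq)⟩

theorem exists_tensor_algEquiv_matrix_of_not_albertForm_anisotropic (hF : (2 : F) ≠ 0)
    (hα : α ≠ 0) (hβ : β ≠ 0) (hγ : γ ≠ 0) (hδ : δ ≠ 0)
    (h : ¬ (albertForm α β γ δ).Anisotropic) : ∃ c d : F, c ≠ 0 ∧ d ≠ 0 ∧
      Nonempty (ℍ[F,α,β] ⊗[F] ℍ[F,γ,δ] ≃ₐ[F] Matrix (Fin 2) (Fin 2) ℍ[F,c,d]) := by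
  obtain ⟨v, w, hvw, hv⟩ := exists_pureForm_eq_pureForm_ne_zero hF hα hβ hγ hδ h
  obtain ⟨v', hvv', hv'⟩ := exists_polar_eq_zero_pureForm_ne_zero hF hα hβ hv
  obtain ⟨w', hww', hw'⟩ := exists_polar_eq_zero_pureForm_ne_zero hF hγ hδ (hvw ▸ hv)
  obtain ⟨e⟩ := nonempty_algEquiv_quaternionAlgebra hF hv hv' (orthogonalBasis hvv')
  obtain ⟨e'⟩ := nonempty_algEquiv_quaternionAlgebra hF (hvw ▸ hv) hw' (orthogonalBasis hww')
  rw [← hvw] at e'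
  obtain ⟨m⟩ := nonempty_tensor_algEquiv_matrix_of_common_slot hF hv hv' hw'
  exact ⟨_, _, hv, mul_ne_zero hv' hw',
    ⟨(Algebra.TensorProduct.congr e.symm e'.symm).trans m⟩⟩

theorem albertForm_anisotropic_of_forall_isUnit (hF : (2 : F) ≠ 0) (hα : α ≠ 0) (hβ : β ≠ 0)
    (hγ : γ ≠ 0) (hδ : δ ≠ 0) (h : ∀ x : ℍ[F,α,β] ⊗[F] ℍ[F,γ,δ], x ≠ 0 → IsUnit x) :
    (albertForm α β γ δ).Anisotropic := by
  by_contra hiso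
  obtain ⟨c, d, -, -, ⟨e⟩⟩ :=
    exists_tensor_algEquiv_matrix_of_not_albertForm_anisotropic hF hα hβ hγ hδ hiso
  obtain ⟨M, hM, hMunit⟩ := exists_ne_zero_not_isUnit_matrix (m := Fin 2) (R := ℍ[F,c,d])
  exact hMunit (by simpa using (h (e.symm M) (by simpa using hM)).map e)

end Criterion

end Albert

/-- Albert: over a field `F` of characteristic `≠ 2`, the biquaternion algebra
`(α,β) ⊗ (γ,δ)` is a division algebra iff the Albert form `⟨α, β, -αβ, -γ, -δ, γδ⟩` is
anisotropic; and if the Albert form is isotropic then `(α,β) ⊗ (γ,δ)` is Brauer-equivalent to a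
quaternion algebra over `F`. -/
theorem stmt_14 (F : Type*) [Field F] (hF : (2 : F) ≠ 0)
    (α β γ δ : F) (hα : α ≠ 0) (hβ : β ≠ 0) (hγ : γ ≠ 0) (hδ : δ ≠ 0) :
    ((∀ x : ℍ[F, α, β] ⊗[F] ℍ[F, γ, δ], x ≠ 0 → IsUnit x) ↔
      (QuadraticMap.weightedSumSquares F
        (fun i : Fin 6 => [α, β, -(α * β), -γ, -δ, γ * δ].get i)).Anisotropic) ∧
    (¬ (QuadraticMap.weightedSumSquares F
        (fun i : Fin 6 => [α, β, -(α * β), -γ, -δ, γ * δ].get i)).Anisotropic →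
      ∃ c d : F, c ≠ 0 ∧ d ≠ 0 ∧ ∃ n m : ℕ, 0 < n ∧ 0 < m ∧
        Nonempty ((Matrix (Fin n) (Fin n) (ℍ[F, α, β] ⊗[F] ℍ[F, γ, δ])) ≃ₐ[F]
          (Matrix (Fin m) (Fin m) ℍ[F, c, d]))) := by
  refine ⟨⟨Albert.albertForm_anisotropic_of_forall_isUnit hF hα hβ hγ hδ,
    fun h _ ↦ Albert.isUnit_of_albertForm_anisotropic hF hα hβ h⟩, fun h ↦ ?_⟩
  obtain ⟨c, d, hc, hd, ⟨e⟩⟩ :=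
    Albert.exists_tensor_algEquiv_matrix_of_not_albertForm_anisotropic hF hα hβ hγ hδ h
  exact ⟨c, d, hc, hd, 1, 2, one_pos, two_pos, ⟨e.mapMatrix.trans <|
    (Matrix.compAlgEquiv _ _ _ F).trans <| Matrix.reindexAlgEquiv F _ (.uniqueProd _ _)⟩⟩
end

section
/- Let E be the elliptic curve y² + y = x³ + x² - 12x - 21 over ℚ (conductor 67, discriminant -67). Then E(ℚ) = 0, i.e. the Mordell–Weil group of E over ℚ is trivial. -/
/-- The elliptic curve `y² + y = x³ + x² - 12x - 21` over `ℚ` (conductor 67). -/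
noncomputable def E67 : WeierstrassCurve ℚ := ⟨0, 1, 1, -12, -21⟩

/-!
The curve has a single point modulo `2`, so the `x`-coordinate of an affine rational point has an
even denominator. Let `K` be the cubic field generated by a root `T` of the `2`-division polynomial;
it has discriminant `-268`, class number one and unit rank one. Two-descent in `K` writes `x - T`,
up to a rational square, as a unit of norm one times a square. Modulo squares the units of norm one
are generated by a single unit `v`, and parity of coordinates excludes `v`, so `x - T` is a square
and the point is twice another one. Halving a point divides the `2`-part of the denominator of `x`
by at least `4`, so this denominator would be divisible by every power of `4`.
-/

open Polynomial NumberField Module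

theorem den_aeval_of_monic {p : ℤ[X]} (hp : p.Monic) (x : ℚ) :
    (aeval x p).den = x.den ^ p.natDegree := by
  set N := (p.scaleRoots x.den).eval x.num with hN
  have hnum : (N : ℚ) = x.den ^ p.natDegree * aeval x p := by
    have := scaleRoots_eval₂_mul (p := p) (Int.castRingHom ℚ) x (x.den : ℤ)
    rw [eq_intCast, Int.cast_natCast, Rat.den_mul_eq_num] at this
    rw [aeval_def, algebraMap_int_eq, ← this, hN, ← eq_intCast (Int.castRingHom ℚ) (eval _ _),
      ← eval₂_at_apply, eq_intCast]
  have hmod : (x.den : ℤ) ∣ N - x.num ^ p.natDegree := by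
    let φ := Ideal.Quotient.mk (Ideal.span {(x.den : ℤ)})
    have hden : φ x.den = 0 := Ideal.Quotient.eq_zero_iff_dvd _ _ |>.mpr dvd_rfl
    rw [← Ideal.Quotient.eq_zero_iff_dvd, map_sub, sub_eq_zero, hN]
    nontriviality ℤ ⧸ Ideal.span {(x.den : ℤ)}
    have hmap : (p.scaleRoots x.den).map φ = X ^ p.natDegree := by
      rw [map_scaleRoots _ _ _ (by simp [hp.leadingCoeff]), hden, scaleRoots_zero,
        (hp.map φ).leadingCoeff, one_smul, hp.natDegree_map]
    change φ _ = φ _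
    rw [← eval_map_apply, hmap, eval_pow, eval_X, map_pow]
  have hcoprime : IsCoprime N ((x.den : ℤ) ^ p.natDegree) := by
    obtain ⟨k, hk⟩ := hmod
    rw [sub_eq_iff_eq_add'.mp hk]
    exact ((IsCoprime.pow_left x.isCoprime_num_den).add_mul_left_left k).pow_right
  have hval : aeval x p = N / ((x.den : ℤ) ^ p.natDegree : ℤ) := by
    push_cast
    rw [hnum, mul_div_cancel_left₀ _ (pow_ne_zero _ (by exact_mod_cast x.den_nz))]
  rw [hval]
  exact_mod_cast Rat.den_div_eq_of_coprime (by positivity)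
    (Int.isCoprime_iff_nat_coprime.mp hcoprime)

theorem exists_eq_sq_and_eq_cube {m n : ℕ} (hn : n ≠ 0) (h : m ^ 2 = n ^ 3) :
    ∃ d, n = d ^ 2 ∧ m = d ^ 3 := by
  obtain ⟨d, rfl⟩ : n ∣ m := (Nat.pow_dvd_pow_iff two_ne_zero).mp ⟨n, by rw [h]; ring⟩
  have hd : n = d ^ 2 := by
    have : n ^ 2 * d ^ 2 = n ^ 2 * n := by rw [← mul_pow, h]; ring
    exact (mul_left_cancel₀ (pow_ne_zero 2 hn) this).symm
  exact ⟨d, hd, by rw [hd]; ring⟩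

theorem norm_neg_of_odd_finrank {R S : Type*} [CommRing R] [CommRing S] [Algebra R S]
    [Module.Free R S] (h : Odd (finrank R S)) (x : S) :
    Algebra.norm R (-x) = -Algebra.norm R x := by
  rw [neg_eq_neg_one_mul, map_mul, ← map_one (algebraMap R S), ← map_neg, Algebra.norm_algebraMap,
    h.neg_one_pow, neg_one_mul]

section UnitGroup
variable {K : Type*} [Field K] [NumberField K]

theorem exists_forall_eq_zpow_or_eq_neg_zpow (hodd : Odd (finrank ℚ K))
    (hrank : Units.rank K = 1) :
    ∃ η : (𝓞 K)ˣ, ∀ u : (𝓞 K)ˣ, ∃ n : ℤ, u = η ^ n ∨ u = -η ^ n := by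
  have : Unique (Fin (Units.rank K)) := by rw [hrank]; infer_instance
  refine ⟨Units.fundSystem K default, fun u => ?_⟩
  obtain ⟨⟨ζ, e⟩, hu, -⟩ := Units.exist_unique_eq_mul_prod K u
  rw [Fintype.prod_unique] at hu
  refine ⟨e default, ?_⟩
  rcases Units.torsion_eq_one_or_neg_one_of_odd_finrank hodd ζ with hζ | hζ
  · exact .inl (by rw [hu, hζ, one_mul])
  · exact .inr (by rw [hu, hζ, neg_one_mul])

theorem exists_forall_norm_eq_one_mem_zpowers (hodd : Odd (finrank ℚ K))
    (hrank : Units.rank K = 1) :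
    ∃ η : (𝓞 K)ˣ, ∀ u : (𝓞 K)ˣ, Algebra.norm ℤ (u : 𝓞 K) = 1 → u ∈ Subgroup.zpowers η := by
  let N : (𝓞 K)ˣ →* ℤˣ := Units.map (Algebra.norm ℤ)
  have hneg (u : (𝓞 K)ˣ) : N (-u) = -N u := by
    ext
    exact norm_neg_of_odd_finrank (by rwa [RingOfIntegers.rank]) _
  obtain ⟨η, hη⟩ := exists_forall_eq_zpow_or_eq_neg_zpow hodd hrank
  wlog hN : N η = 1 generalizing η
  · refine this (-η) (fun u => ?_) ?_
    · obtain ⟨n, hu⟩ := hη u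
      refine ⟨n, ?_⟩
      rcases n.even_or_odd with hn | hn
      · rwa [hn.neg_zpow]
      · rw [hn.neg_zpow, neg_neg]; exact hu.symm
    · rw [hneg, (Int.units_eq_one_or _).resolve_left hN, neg_neg]
  refine ⟨η, fun u hu => ?_⟩
  have hu' : N u = 1 := Units.ext hu
  obtain ⟨n, rfl | rfl⟩ := hη u
  · exact ⟨n, rfl⟩
  · rw [hneg, map_zpow, hN, one_zpow] at hu'
    exact absurd hu' (by decide)

end UnitGroup

theorem isSquare_or_isSquare_mul_of_mem_zpowers {G : Type*} [Group G] {g x v : G}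
    (hx : x ∈ Subgroup.zpowers g) (hv : v ∈ Subgroup.zpowers g) (hsq : ¬IsSquare v) :
    IsSquare x ∨ IsSquare (v * x) := by
  obtain ⟨m, rfl⟩ := hx
  obtain ⟨n, rfl⟩ := hv
  have hn : ¬Even n := fun h => hsq (h.isSquare_zpow g)
  by_cases hm : Even m
  · exact .inl (hm.isSquare_zpow g)
  · refine .inr ?_
    simp only [← zpow_add]
    exact (Int.even_add.mpr (by tauto)).isSquare_zpow g

section Discriminant
variable {R S ι : Type*} [CommRing R] [Fintype ι] [DecidableEq ι]

theorem det_smul_mem_span_range [AddCommGroup S] [Module R S] (b : Basis ι R S) (v : ι → S)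
    (z : S) : b.det v • z ∈ Submodule.span R (Set.range v) := by
  have hf : LinearMap.toMatrix b b (b.constr ℕ v) = b.toMatrix v :=
    (b.toMatrix_eq_toMatrix_constr v).symm
  rw [← b.constr_range (S := ℕ), LinearMap.mem_range]
  refine ⟨b.equivFun.symm ((b.toMatrix v).adjugate.mulVec (b.repr z)), b.equivFun.injective ?_⟩
  rw [b.equivFun_apply, ← LinearMap.toMatrix_mulVec_repr b b, hf, ← b.equivFun_apply,
    LinearEquiv.apply_symm_apply, Matrix.mulVec_mulVec, Matrix.mul_adjugate, Matrix.smul_mulVec,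
    Matrix.one_mulVec, map_smul, b.det_apply, b.equivFun_apply]

theorem discr_eq_det_sq_mul_discr [CommRing S] [Algebra R S] (b : Basis ι R S) (v : ι → S) :
    Algebra.discr R v = b.det v ^ 2 * Algebra.discr R b := by
  rw [b.det_apply, ← Algebra.discr_of_matrix_vecMul, Basis.toMatrix_map_vecMul]

end Discriminant

section RingOfIntegers
variable {K : Type*} [Field K] [NumberField K]

theorem discr_ringOfIntegers_coe {ι : Type*} [Fintype ι] [DecidableEq ι] (v : ι → 𝓞 K) :
    Algebra.discr ℚ (fun i => (v i : K)) = Algebra.discr ℤ v := by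
  rw [Algebra.discr_def, Algebra.discr_def, Int.cast_det]
  congr 1
  ext i j
  have := Algebra.trace_localization ℤ (nonZeroDivisors ℤ) (Rₘ := ℚ) (Sₘ := K) (v i * v j)
  simpa [Algebra.traceMatrix_apply, Algebra.traceForm_apply] using this

theorem smul_mem_adjoin_of_discr_eq_mul_squarefree {B : PowerBasis ℚ K} {θ : 𝓞 K}
    (hθ : B.gen = θ) {k m : ℤ} (hm : Squarefree m)
    (hdiscr : Algebra.discr ℚ B.basis = (k * m : ℤ)) (z : 𝓞 K) :
    k • z ∈ Algebra.adjoin ℤ {θ} := by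
  let v : Fin B.dim → 𝓞 K := fun i => θ ^ (i : ℕ)
  have hcard : Module.finrank ℤ (𝓞 K) = B.dim := by rw [RingOfIntegers.rank, B.finrank]
  let b := Module.finBasisOfFinrankEq ℤ (𝓞 K) hcard
  have hv : Algebra.discr ℤ v = k * m := by
    have : (fun i => (v i : K)) = B.basis := by
      ext i
      rw [B.basis_eq_pow, hθ]
      exact map_pow _ _ _
    rw [← this, discr_ringOfIntegers_coe] at hdiscr
    exact_mod_cast hdiscr
  -- The square of the index of `ℤ[θ]` divides `k * m`, so the index divides `k`.
  obtain ⟨c, hc⟩ : b.det v ∣ k := hm.dvd_of_squarefree_of_mul_dvd_mul_left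
    ⟨Algebra.discr ℤ b, by rw [← hv, discr_eq_det_sq_mul_discr b v, sq]⟩
  have hspan : Submodule.span ℤ (Set.range v) ≤
      Subalgebra.toSubmodule (Algebra.adjoin ℤ {θ}) := by
    rw [Submodule.span_le]
    rintro _ ⟨i, rfl⟩
    exact pow_mem (Algebra.self_mem_adjoin_singleton ℤ θ) i
  rw [hc, mul_comm, mul_smul]
  exact Subalgebra.smul_mem _ (hspan (det_smul_mem_span_range b v z)) c

theorem adjoin_eq_top_of_isEisensteinAt {B : PowerBasis ℚ K} {θ : 𝓞 K} (hθ : B.gen = θ) {p m : ℤ}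
    {n : ℕ} (hp : Prime p) (hei : (minpoly ℤ θ).IsEisensteinAt (Ideal.span {p}))
    (hm : Squarefree m) (hdiscr : Algebra.discr ℚ B.basis = (p ^ n * m : ℤ)) :
    Algebra.adjoin ℤ {θ} = ⊤ := by
  have hmap : (Algebra.adjoin ℤ {θ}).map (IsScalarTower.toAlgHom ℤ (𝓞 K) K) =
      Algebra.adjoin ℤ {B.gen} := by
    rw [AlgHom.map_adjoin_singleton, hθ]
    rfl
  refine Algebra.eq_top_iff.mpr fun z => ?_
  obtain ⟨w, hw, hwz⟩ : (z : K) ∈ (Algebra.adjoin ℤ {θ}).map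
      (IsScalarTower.toAlgHom ℤ (𝓞 K) K) := by
    rw [hmap]
    refine mem_adjoin_of_smul_prime_pow_smul_of_minpoly_isEisensteinAt hp
      (hθ ▸ θ.isIntegral_coe) (n := n) z.isIntegral_coe ?_ ?_
    · rw [← hmap]
      exact ⟨_, smul_mem_adjoin_of_discr_eq_mul_squarefree hθ hm hdiscr z, map_zsmul _ _ _⟩
    · rwa [hθ, RingOfIntegers.minpoly_coe]
  rwa [← RingOfIntegers.coe_injective hwz]

end RingOfIntegers

section CubicBasis
variable {R S : Type*} [CommRing R] [CommRing S] [Algebra R S] {b : Basis (Fin 3) R S} {s : S}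
  {u v w : R}

theorem leftMulMatrix_cubic (hb : ∀ i, b i = s ^ (i : ℕ))
    (hs : s ^ 3 = u • s ^ 2 + v • s + w • (1 : S)) (p q r : R) :
    Algebra.leftMulMatrix b (p • (1 : S) + q • s + r • s ^ 2) =
      !![p, w * r, w * (q + u * r);
         q, p + v * r, v * (q + u * r) + w * r;
         r, q + u * r, p + v * r + u * (q + u * r)] := by
  have hrepr (a a' a'' : R) : b.repr (a • (1 : S) + a' • s + a'' • s ^ 2) = ![a, a', a''] := by
    have : a • (1 : S) + a' • s + a'' • s ^ 2 = b.equivFun.symm ![a, a', a''] := by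
      simp [b.equivFun_symm_apply, Fin.sum_univ_three, hb]
    rw [this, ← b.equivFun_apply, LinearEquiv.apply_symm_apply]
  have h0 : (p • (1 : S) + q • s + r • s ^ 2) * b 0 = p • (1 : S) + q • s + r • s ^ 2 := by
    simp [hb]
  have h1 : (p • (1 : S) + q • s + r • s ^ 2) * b 1 =
      (w * r) • (1 : S) + (p + v * r) • s + (q + u * r) • s ^ 2 := by
    simp only [Algebra.smul_def, hb, map_add, map_mul, mul_one, Fin.val_one, pow_one] at hs ⊢
    linear_combination algebraMap R S r * hs
  have h2 : (p • (1 : S) + q • s + r • s ^ 2) * b 2 = (w * (q + u * r)) • (1 : S) +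
      (v * (q + u * r) + w * r) • s + (p + v * r + u * (q + u * r)) • s ^ 2 := by
    simp only [Algebra.smul_def, hb, map_add, map_mul, mul_one, Fin.val_two] at hs ⊢
    linear_combination
      (algebraMap R S r * s + algebraMap R S q + algebraMap R S u * algebraMap R S r) * hs
  ext i j
  rw [Algebra.leftMulMatrix_eq_repr_mul]
  fin_cases j
  · change b.repr (_ * b 0) i = _
    rw [h0, hrepr]; fin_cases i <;> rfl
  · change b.repr (_ * b 1) i = _
    rw [h1, hrepr]; fin_cases i <;> rfl
  · change b.repr (_ * b 2) i = _
    rw [h2, hrepr]; fin_cases i <;> rfl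

theorem trace_cubic (hb : ∀ i, b i = s ^ (i : ℕ))
    (hs : s ^ 3 = u • s ^ 2 + v • s + w • (1 : S)) (p q r : R) :
    Algebra.trace R S (p • (1 : S) + q • s + r • s ^ 2) =
      3 * p + u * q + (u ^ 2 + 2 * v) * r := by
  rw [Algebra.trace_eq_matrix_trace b, leftMulMatrix_cubic hb hs, Matrix.trace_fin_three_of]
  ring

theorem discr_cubic (hb : ∀ i, b i = s ^ (i : ℕ))
    (hs : s ^ 3 = u • s ^ 2 + v • s + w • (1 : S)) :
    Algebra.discr R b =
      u ^ 2 * v ^ 2 + 4 * v ^ 3 - 4 * u ^ 3 * w - 27 * w ^ 2 - 18 * u * v * w := by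
  have htrace := trace_cubic hb hs
  have hs4 : s ^ 4 = (u * w) • (1 : S) + (u * v + w) • s + (u ^ 2 + v) • s ^ 2 := by
    simp only [Algebra.smul_def, map_add, map_mul, map_pow, mul_one] at hs ⊢
    linear_combination (s + algebraMap R S u) * hs
  have ht0 := htrace 1 0 0
  have ht1 := htrace 0 1 0
  have ht2 := htrace 0 0 1
  have ht3 := htrace w v u
  have ht4 := htrace (u * w) (u * v + w) (u ^ 2 + v)
  rw [← hs4] at ht4
  rw [show w • (1 : S) + v • s + u • s ^ 2 = s ^ 3 by rw [hs]; abel] at ht3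
  simp only [zero_smul, one_smul, add_zero, zero_add] at ht0 ht1 ht2
  have hentry (i j : Fin 3) :
      Algebra.traceMatrix R b i j = Algebra.trace R S (s ^ (i + j : ℕ)) := by
    rw [Algebra.traceMatrix_apply, Algebra.traceForm_apply, hb, hb, pow_add]
  simp only [Algebra.discr_def, Matrix.det_fin_three, hentry, Fin.val_zero, Fin.val_one,
    Fin.val_two, Nat.reduceAdd, pow_zero, pow_one, ht0, ht1, ht2, ht3, ht4]
  ring

end CubicBasis

section Ideals
variable {S : Type*} [CommRing S] [IsDedekindDomain S] [Module.Free ℤ S] {θ : S} {a b c : ℤ}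

theorem absNorm_dvd_natAbs_of_adjoin_eq_top (hθ : Algebra.adjoin ℤ {θ} = ⊤) (hbc : IsCoprime b c)
    {I : Ideal S} (hα : (a - b * θ : S) ∈ I) (hc : (c : S) ∈ I) :
    Ideal.absNorm I ∣ c.natAbs := by
  obtain ⟨x, y, hxy⟩ := hbc
  let φ : S →ₐ[ℤ] S ⧸ I := Ideal.Quotient.mkₐ ℤ I
  have hφθ : φ θ = algebraMap ℤ (S ⧸ I) (x * a) := by
    have hmem : θ - algebraMap ℤ S (x * a) = y * θ * c - x * (a - b * θ) := by
      have hxy' : (x * b + y * c : S) = 1 := by exact_mod_cast congrArg (Int.cast (R := S)) hxy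
      push_cast [algebraMap_int_eq, eq_intCast]
      linear_combination -θ * hxy'
    rw [← φ.commutes, ← sub_eq_zero, ← map_sub, hmem]
    exact Ideal.Quotient.eq_zero_iff_mem.mpr
      (sub_mem (I.mul_mem_left _ hc) (I.mul_mem_left _ hα))
  have hsurj (z : S) : ∃ n : ℤ, φ z = algebraMap ℤ (S ⧸ I) n := by
    have hz : z ∈ Algebra.adjoin ℤ {θ} := hθ ▸ Algebra.mem_top
    rw [Algebra.adjoin_singleton_eq_range_aeval] at hz
    obtain ⟨f, rfl⟩ := hz
    exact ⟨f.eval (x * a), by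
      rw [AlgHom.toRingHom_eq_coe, RingHom.coe_coe, ← aeval_algHom_apply, hφθ,
        aeval_algebraMap_apply_eq_algebraMap_eval]⟩
  have horder : addOrderOf (1 : S ⧸ I) = Ideal.absNorm I := by
    rw [Ideal.absNorm_apply]
    refine addOrderOf_eq_card_of_forall_mem_zmultiples fun z => ?_
    obtain ⟨z, rfl⟩ := Ideal.Quotient.mk_surjective z
    obtain ⟨n, hn⟩ := hsurj z
    refine ⟨n, ?_⟩
    simp only [zsmul_one]
    exact hn.symm
  rw [← horder, ← Int.natCast_dvd, addOrderOf_dvd_iff_zsmul_eq_zero, zsmul_one,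
    ← map_intCast (Ideal.Quotient.mk I)]
  exact Ideal.Quotient.eq_zero_iff_mem.mpr hc

variable [Module.Finite ℤ S]

theorem eq_of_le_of_absNorm_dvd {I J : Ideal S} (hle : I ≤ J)
    (hdvd : Ideal.absNorm I ∣ Ideal.absNorm J) : I = J := by
  rcases eq_or_ne J ⊥ with rfl | hJ
  · exact le_bot_iff.mp hle
  obtain ⟨L, rfl⟩ := Ideal.dvd_iff_le.mpr hle
  have hL : Ideal.absNorm L = 1 := by
    rw [map_mul] at hdvd
    exact Nat.dvd_one.mp ((mul_dvd_mul_iff_left (mt Ideal.absNorm_eq_zero_iff.mp hJ)).mp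
      (by rwa [mul_one]))
  rw [Ideal.absNorm_eq_one_iff.mp hL, Ideal.mul_top]

theorem span_singleton_eq_of_mem_of_prime_natAbs_norm {P : Ideal S} (hP : P ≠ ⊤) {x : S}
    (hx : x ∈ P) (hprime : (Algebra.norm ℤ x).natAbs.Prime) : Ideal.span {x} = P := by
  have hle : Ideal.span {x} ≤ P := (Ideal.span_singleton_le_iff_mem P).mpr hx
  refine eq_of_le_of_absNorm_dvd hle ?_
  have hdvd := Ideal.absNorm_dvd_absNorm_of_le hle
  rw [Ideal.absNorm_span_singleton] at hdvd ⊢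
  rw [(hprime.eq_one_or_self_of_dvd _ hdvd).resolve_left (mt Ideal.absNorm_eq_one_iff.mp hP)]

theorem span_pair_sq_eq_span_singleton (hθ : Algebra.adjoin ℤ {θ} = ⊤) (hbc : IsCoprime b c)
    (hnorm : Algebra.norm ℤ (a - b * θ : S) = c ^ 2) :
    Ideal.span {(c : S), (a - b * θ : S)} ^ 2 = Ideal.span {(a - b * θ : S)} := by
  set α : S := a - b * θ
  set I := Ideal.span {(c : S), α} with hI
  have hNα : Ideal.absNorm (Ideal.span {α}) = c.natAbs ^ 2 := by
    rw [Ideal.absNorm_span_singleton, hnorm, Int.natAbs_pow]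
  have hcsq : (c * c : S) ∈ Ideal.span {α} := by
    have hmem := Ideal.absNorm_mem (Ideal.span {α})
    rwa [hNα, ← Int.cast_natCast, Nat.cast_pow, Int.natAbs_sq, sq, Int.cast_mul] at hmem
  have hle : I ^ 2 ≤ Ideal.span {α} := by
    rw [hI, sq, Ideal.span_pair_mul_span_pair, Ideal.span_le]
    have hα := Ideal.mem_span_singleton_self α
    simp only [Set.insert_subset_iff, Set.singleton_subset_iff, SetLike.mem_coe]
    exact ⟨hcsq, Ideal.mul_mem_left _ _ hα, Ideal.mul_mem_right _ _ hα, Ideal.mul_mem_left _ _ hα⟩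
  refine eq_of_le_of_absNorm_dvd hle ?_
  rw [map_pow, hNα]
  exact pow_dvd_pow_of_dvd (absNorm_dvd_natAbs_of_adjoin_eq_top hθ hbc (a := a)
    (Ideal.subset_span (.inr rfl)) (Ideal.subset_span (.inl rfl))) 2

theorem exists_sq_mul_unit_eq [IsPrincipalIdealRing S] (hθ : Algebra.adjoin ℤ {θ} = ⊤)
    (hbc : IsCoprime b c) (hnorm : Algebra.norm ℤ (a - b * θ : S) = c ^ 2) :
    ∃ (β : S) (u : Sˣ), β ^ 2 * u = a - b * θ := by
  obtain ⟨β, hβ⟩ := IsPrincipalIdealRing.principal (Ideal.span {(c : S), (a - b * θ : S)})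
  have := span_pair_sq_eq_span_singleton hθ hbc hnorm
  rw [hβ, Ideal.submodule_span_eq, Ideal.span_singleton_pow,
    Ideal.span_singleton_eq_span_singleton] at this
  obtain ⟨u, hu⟩ := this
  exact ⟨β, u, hu⟩

end Ideals

section CubicField
variable {K : Type*} [Field K] [NumberField K]

theorem nrComplexPlaces_eq_one_of_finrank_eq_three (h3 : finrank ℚ K = 3) (hneg : discr K < 0) :
    InfinitePlace.nrComplexPlaces K = 1 := by
  have hcard := InfinitePlace.card_add_two_mul_card_eq_rank K
  have hsign := sign_discr K
  rw [Int.sign_eq_neg_one_of_neg hneg] at hsign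
  have hle : InfinitePlace.nrComplexPlaces K ≤ 1 := by omega
  interval_cases InfinitePlace.nrComplexPlaces K
  · norm_num at hsign
  · rfl

theorem units_rank_eq_one_of_finrank_eq_three (h3 : finrank ℚ K = 3) (hneg : discr K < 0) :
    Units.rank K = 1 := by
  have hcard := InfinitePlace.card_add_two_mul_card_eq_rank K
  have hsum := InfinitePlace.card_eq_nrRealPlaces_add_nrComplexPlaces K
  rw [nrComplexPlaces_eq_one_of_finrank_eq_three h3 hneg] at hcard hsum
  rw [Units.rank]
  omega

end CubicField

/-- A defining polynomial of the cubic field over which `E67` acquires a point of order two, with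
smaller coefficients than the monic form of the `2`-division polynomial. -/
noncomputable def g67 : ℤ[X] := X ^ 3 - 2 * X ^ 2 - 2 * X - 2

theorem natDegree_g67 : g67.natDegree = 3 := by
  unfold g67; compute_degree!

theorem monic_g67 : g67.Monic := by
  unfold g67; monicity!

theorem isEisensteinAt_g67 : g67.IsEisensteinAt (Ideal.span {2}) := by
  have hcoeff : g67 = C 1 * X ^ 3 + C (-2) * X ^ 2 + C (-2) * X + C (-2) := by
    simp only [g67, map_neg, map_one, map_ofNat]; ring
  refine monic_g67.isEisensteinAt_of_mem_of_notMem ?_ (fun {n} hn => ?_) ?_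
  · rw [Ne, Ideal.span_singleton_eq_top]
    decide
  · rw [natDegree_g67] at hn
    rw [Ideal.mem_span_singleton, hcoeff]
    interval_cases n <;> simp [coeff_X]
  · rw [Ideal.span_singleton_pow, Ideal.mem_span_singleton, hcoeff]
    simp [coeff_X]

theorem irreducible_g67 : Irreducible g67 :=
  isEisensteinAt_g67.irreducible ((Ideal.span_singleton_prime two_ne_zero).mpr Int.prime_two)
    monic_g67.isPrimitive (by rw [natDegree_g67]; norm_num)

instance : Fact (Irreducible (g67.map (algebraMap ℤ ℚ))) :=
  ⟨(monic_g67.irreducible_iff_irreducible_map_fraction_map).mp irreducible_g67⟩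

/-- The cubic field `ℚ[X] / (g67)` over which `E67` acquires a point of order two. -/
def K67 : Type := AdjoinRoot (g67.map (algebraMap ℤ ℚ))

noncomputable instance : Field K67 := inferInstanceAs (Field (AdjoinRoot _))

instance : CharZero K67 := inferInstanceAs (CharZero (AdjoinRoot (g67.map (algebraMap ℤ ℚ))))

/-- The power basis `1, X, X ^ 2` of `K67` over `ℚ`. -/
noncomputable def powerBasisK67 : PowerBasis ℚ K67 :=
  AdjoinRoot.powerBasis (monic_g67.map (algebraMap ℤ ℚ)).ne_zero

instance : NumberField K67 where
  to_finiteDimensional := powerBasisK67.finite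

theorem dim_powerBasisK67 : powerBasisK67.dim = 3 := by
  rw [powerBasisK67, AdjoinRoot.powerBasis_dim, monic_g67.natDegree_map, natDegree_g67]

theorem finrank_K67 : finrank ℚ K67 = 3 := by
  rw [powerBasisK67.finrank, dim_powerBasisK67]

theorem aeval_gen_powerBasisK67 : aeval powerBasisK67.gen g67 = 0 := by
  have := AdjoinRoot.eval₂_root (g67.map (algebraMap ℤ ℚ))
  rwa [eval₂_map] at this

/-- The root of `g67` in `K67`, which generates the ring of integers. -/
noncomputable def s67 : 𝓞 K67 := ⟨powerBasisK67.gen, g67, monic_g67, aeval_gen_powerBasisK67⟩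

theorem aeval_s67 : aeval s67 g67 = 0 :=
  RingOfIntegers.coe_injective <| by
    rw [← aeval_algebraMap_apply, map_zero]
    exact aeval_gen_powerBasisK67

theorem s67_pow_three : s67 ^ 3 = 2 * s67 ^ 2 + 2 * s67 + 2 := by
  have := aeval_s67
  simp only [g67, map_sub, map_mul, map_pow, aeval_X, map_ofNat] at this
  linear_combination this

theorem minpoly_s67 : minpoly ℤ s67 = g67 := by
  have hint : IsIntegral ℤ s67 := ⟨g67, monic_g67, aeval_s67⟩
  refine eq_of_monic_of_associated (minpoly.monic hint) monic_g67 ?_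
  exact (minpoly.irreducible hint).associated_of_dvd irreducible_g67
    (minpoly.isIntegrallyClosed_dvd hint aeval_s67)

theorem discr_powerBasisK67 : Algebra.discr ℚ powerBasisK67.basis = -268 := by
  have hs : powerBasisK67.gen ^ 3 =
      (2 : ℚ) • powerBasisK67.gen ^ 2 + (2 : ℚ) • powerBasisK67.gen + (2 : ℚ) • 1 := by
    have h := aeval_gen_powerBasisK67
    simp only [g67, map_sub, map_mul, map_pow, aeval_X, map_ofNat] at h
    simp only [Algebra.smul_def, map_ofNat]
    linear_combination h
  rw [← Algebra.discr_reindex ℚ powerBasisK67.basis (finCongr dim_powerBasisK67),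
    ← Basis.coe_reindex, discr_cubic (fun i => by simp) hs]
  norm_num

theorem adjoin_s67 : Algebra.adjoin ℤ {s67} = ⊤ := by
  refine adjoin_eq_top_of_isEisensteinAt (p := 2) (n := 2) (m := -67) rfl Int.prime_two ?_ ?_ ?_
  · rw [minpoly_s67]; exact isEisensteinAt_g67
  · exact (Int.prime_iff_natAbs_prime.mpr (by norm_num)).squarefree
  · rw [discr_powerBasisK67]; norm_num

/-- The basis `1, s67, s67 ^ 2` of the ring of integers of `K67`. -/
noncomputable def integralBasisK67 : Basis (Fin 3) ℤ (𝓞 K67) :=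
  (PowerBasis.ofAdjoinEqTop' s67.isIntegral adjoin_s67).basis.reindex <|
    finCongr (by rw [PowerBasis.ofAdjoinEqTop'_dim, minpoly_s67, natDegree_g67])

theorem integralBasisK67_apply (i : Fin 3) : integralBasisK67 i = s67 ^ (i : ℕ) := by
  rw [integralBasisK67, Basis.reindex_apply, PowerBasis.basis_eq_pow,
    PowerBasis.ofAdjoinEqTop'_gen]
  rfl

theorem s67_pow_three_eq_smul : s67 ^ 3 = (2 : ℤ) • s67 ^ 2 + (2 : ℤ) • s67 + (2 : ℤ) • 1 := by
  simp only [zsmul_eq_mul, Int.cast_ofNat, mul_one, s67_pow_three]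

theorem discr_K67 : discr K67 = -268 := by
  rw [← discr_eq_discr K67 integralBasisK67,
    discr_cubic integralBasisK67_apply s67_pow_three_eq_smul]
  norm_num

theorem norm_coord_K67 (p q r : ℤ) :
    Algebra.norm ℤ (p + q * s67 + r * s67 ^ 2 : 𝓞 K67) =
      p ^ 3 + 2 * q ^ 3 + 4 * r ^ 3 + 2 * p ^ 2 * q + 8 * p ^ 2 * r - 2 * p * q ^ 2 -
        4 * p * r ^ 2 + 4 * q ^ 2 * r - 4 * q * r ^ 2 - 10 * p * q * r := by
  have := leftMulMatrix_cubic integralBasisK67_apply s67_pow_three_eq_smul p q r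
  rw [show (p + q * s67 + r * s67 ^ 2 : 𝓞 K67) = p • 1 + q • s67 + r • s67 ^ 2 by
    simp only [zsmul_eq_mul, mul_one], Algebra.norm_eq_matrix_det integralBasisK67, this,
    Matrix.det_fin_three]
  simp only [Matrix.of_apply, Matrix.cons_val', Matrix.cons_val_zero, Matrix.cons_val_one,
    Matrix.cons_val_fin_one, Matrix.cons_val]
  ring

theorem coord_unique_K67 {p q r p' q' r' : ℤ}
    (h : (p + q * s67 + r * s67 ^ 2 : 𝓞 K67) = p' + q' * s67 + r' * s67 ^ 2) :
    p = p' ∧ q = q' ∧ r = r' := by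
  have coord_eq (a b c : ℤ) :
      integralBasisK67.equivFun (a + b * s67 + c * s67 ^ 2) = ![a, b, c] := by
    rw [← LinearEquiv.eq_symm_apply, Basis.equivFun_symm_apply]
    simp [Fin.sum_univ_three, integralBasisK67_apply]
  have hcoord := congrArg integralBasisK67.equivFun h
  rw [coord_eq, coord_eq] at hcoord
  exact ⟨congrFun hcoord 0, congrFun hcoord 1, congrFun hcoord 2⟩

theorem exists_coord_K67 (x : 𝓞 K67) : ∃ p q r : ℤ, x = p + q * s67 + r * s67 ^ 2 :=
  ⟨_, _, _, by
    simpa [Fin.sum_univ_three, integralBasisK67_apply] using (integralBasisK67.sum_repr x).symm⟩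

theorem units_rank_K67 : Units.rank K67 = 1 :=
  units_rank_eq_one_of_finrank_eq_three finrank_K67 (by rw [discr_K67]; norm_num)

theorem minkowskiBound_K67_lt_five :
    (4 / Real.pi) ^ InfinitePlace.nrComplexPlaces K67 *
      ((finrank ℚ K67).factorial / (finrank ℚ K67 : ℝ) ^ finrank ℚ K67 *
        √|(discr K67 : ℝ)|) < 5 := by
  have hplaces : InfinitePlace.nrComplexPlaces K67 = 1 :=
    nrComplexPlaces_eq_one_of_finrank_eq_three finrank_K67 (by rw [discr_K67]; norm_num)
  have hsqrt : √|(discr K67 : ℝ)| ≤ 17 := by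
    rw [discr_K67, Real.sqrt_le_left (by norm_num)]
    norm_num
  have hpi : 4 / Real.pi < 1.28 := by
    rw [div_lt_iff₀ Real.pi_pos]
    linarith [Real.pi_gt_d2]
  rw [hplaces, finrank_K67]
  calc (4 / Real.pi) ^ 1 * ((3 : ℕ).factorial / ((3 : ℕ) : ℝ) ^ 3 * √|(discr K67 : ℝ)|)
      ≤ 1.28 ^ 1 * ((3 : ℕ).factorial / ((3 : ℕ) : ℝ) ^ 3 * 17) := by gcongr
    _ < 5 := by norm_num [Nat.factorial]

theorem natAbs_norm_s67 : (Algebra.norm ℤ s67).natAbs = 2 := by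
  have h := norm_coord_K67 0 1 0
  simp only [Int.cast_zero, Int.cast_one, zero_add, one_mul, zero_mul, add_zero] at h
  rw [h]
  rfl

theorem natAbs_norm_s67_add_one : (Algebra.norm ℤ (s67 + 1)).natAbs = 3 := by
  have h := norm_coord_K67 1 1 0
  simp only [Int.cast_zero, Int.cast_one, one_mul, zero_mul, add_zero] at h
  rw [add_comm, h]
  rfl

theorem s67_mem_of_two_mem {P : Ideal (𝓞 K67)} (hP : P.IsPrime) (h2 : 2 ∈ P) : s67 ∈ P := by
  refine hP.mem_of_pow_mem 3 ?_
  rw [show s67 ^ 3 = (s67 ^ 2 + s67 + 1) * 2 by rw [s67_pow_three]; ring]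
  exact P.mul_mem_left _ h2

theorem s67_add_one_mem_of_absNorm_eq_three {P : Ideal (𝓞 K67)} (hP : P.IsPrime)
    (hnorm : Ideal.absNorm P = 3) : s67 + 1 ∈ P := by
  have h3 : (3 : 𝓞 K67) ∈ P := by simpa [hnorm] using Ideal.absNorm_mem P
  have hcard : Nat.card (𝓞 K67 ⧸ P) = 3 := by rw [← hnorm, Ideal.absNorm_apply]; rfl
  classical
  have : Finite (𝓞 K67 ⧸ P) := Nat.finite_of_card_ne_zero (by rw [hcard]; norm_num)
  have := Fintype.ofFinite (𝓞 K67 ⧸ P)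
  let := Fintype.fieldOfDomain (𝓞 K67 ⧸ P)
  have hfermat : s67 ^ 3 - s67 ∈ P := by
    have := FiniteField.pow_card (Ideal.Quotient.mk P s67)
    rwa [← Nat.card_eq_fintype_card, hcard, ← map_pow, Ideal.Quotient.eq] at this
  refine hP.mem_of_pow_mem 2 ?_
  rw [show (s67 + 1) ^ 2 = (s67 ^ 2 + s67 + 1) * 3 - (s67 ^ 3 - s67) by
    linear_combination s67_pow_three]
  exact sub_mem (P.mul_mem_left _ h3) hfermat

instance : IsPrincipalIdealRing (𝓞 K67) := by
  refine RingOfIntegers.isPrincipalIdealRing_of_isPrincipal_of_norm_le_of_isPrime ?_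
  intro ⟨P, hP0⟩ hP hle
  have hlt : Ideal.absNorm P < 5 := by exact_mod_cast hle.trans_lt minkowskiBound_K67_lt_five
  have hmem := Ideal.absNorm_mem P
  have of_two_mem (h2 : 2 ∈ P) : P.IsPrincipal :=
    ⟨s67, (span_singleton_eq_of_mem_of_prime_natAbs_norm hP.ne_top (s67_mem_of_two_mem hP h2)
      (natAbs_norm_s67 ▸ Nat.prime_two)).symm⟩
  interval_cases hnorm : Ideal.absNorm P
  · exact absurd hnorm (Ideal.absNorm_ne_zero_of_nonZeroDivisors ⟨P, hP0⟩)
  · exact absurd (Ideal.absNorm_eq_one_iff.mp hnorm) hP.ne_top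
  · exact of_two_mem (by exact_mod_cast hmem)
  · exact ⟨s67 + 1, (span_singleton_eq_of_mem_of_prime_natAbs_norm hP.ne_top
      (s67_add_one_mem_of_absNorm_eq_three hP hnorm)
      (natAbs_norm_s67_add_one ▸ Nat.prime_three)).symm⟩
  · refine of_two_mem (hP.mem_of_pow_mem 2 ?_)
    convert hmem using 1
    norm_num

/-- The unit `1 + s67 + s67 ^ 2`, which generates the units of norm one modulo squares. -/
noncomputable def unitK67 : (𝓞 K67)ˣ where
  val := s67 ^ 2 + s67 + 1
  inv := 3 - s67
  val_inv := by linear_combination -s67_pow_three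
  inv_val := by linear_combination -s67_pow_three

theorem val_unitK67 : (unitK67 : 𝓞 K67) = s67 ^ 2 + s67 + 1 := rfl

theorem norm_unitK67 : Algebra.norm ℤ (unitK67 : 𝓞 K67) = 1 := by
  have h := norm_coord_K67 1 1 1
  simp only [Int.cast_one, one_mul] at h
  rw [show (unitK67 : 𝓞 K67) = 1 + s67 + s67 ^ 2 by rw [val_unitK67]; ring, h]
  rfl

theorem sq_coord_K67 (p q r : ℤ) :
    (p + q * s67 + r * s67 ^ 2 : 𝓞 K67) ^ 2 =
      (p ^ 2 + 4 * q * r + 4 * r ^ 2 : ℤ) + (2 * (p * q + 2 * q * r + 3 * r ^ 2) : ℤ) * s67 +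
        (q ^ 2 + 2 * p * r + 4 * q * r + 6 * r ^ 2 : ℤ) * s67 ^ 2 := by
  push_cast
  linear_combination (2 * q * r + r ^ 2 * (s67 + 2) : 𝓞 K67) * s67_pow_three

theorem even_coord_of_isSquare_K67 {p q r : ℤ} (h : IsSquare (p + q * s67 + r * s67 ^ 2 : 𝓞 K67)) :
    Even q := by
  obtain ⟨β, hβ⟩ := h
  obtain ⟨p', q', r', rfl⟩ := exists_coord_K67 β
  rw [← sq, sq_coord_K67] at hβ
  exact (coord_unique_K67 hβ).2.1 ▸ even_two_mul _

theorem not_isSquare_unitK67 : ¬IsSquare unitK67 := fun h => by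
  have h := h.map (Units.coeHom (𝓞 K67))
  rw [Units.coeHom_apply, val_unitK67,
    show s67 ^ 2 + s67 + 1 = (1 : ℤ) + (1 : ℤ) * s67 + (1 : ℤ) * s67 ^ 2 by push_cast; ring] at h
  exact Int.not_even_one (even_coord_of_isSquare_K67 h)

/-- Twice the `x`-coordinate of the point of order two on `E67`: a root of
`X ^ 3 + 2 * X ^ 2 - 48 * X - 166`, the monic form of the `2`-division polynomial. -/
noncomputable def theta67 : 𝓞 K67 := s67 ^ 2 + s67 - 4

theorem adjoin_theta67 : Algebra.adjoin ℤ {theta67} = ⊤ := by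
  have hs : s67 = 36 + 3 * theta67 - theta67 ^ 2 := by
    rw [theta67]
    linear_combination (s67 + 4) * s67_pow_three
  refine top_unique (adjoin_s67.ge.trans (Algebra.adjoin_singleton_le ?_))
  have hθ := Algebra.self_mem_adjoin_singleton ℤ theta67
  rw [hs]
  exact sub_mem (add_mem (ofNat_mem _ 36) (mul_mem (ofNat_mem _ 3) hθ)) (pow_mem hθ 2)

theorem norm_sub_mul_theta67 (a b : ℤ) :
    Algebra.norm ℤ (a - b * theta67 : 𝓞 K67) =
      a ^ 3 + 2 * a ^ 2 * b - 48 * a * b ^ 2 - 166 * b ^ 3 := by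
  have h := norm_coord_K67 (a + 4 * b) (-b) (-b)
  rw [show (a - b * theta67 : 𝓞 K67) =
    (a + 4 * b : ℤ) + (-b : ℤ) * s67 + (-b : ℤ) * s67 ^ 2 by rw [theta67]; push_cast; ring, h]
  ring

theorem not_isSquare_unitK67_mul {a b : ℤ} (ha : Odd a) (hb : Even b) :
    ¬IsSquare ((unitK67 : 𝓞 K67) * (a - b * theta67)) := fun h => by
  rw [show (unitK67 : 𝓞 K67) * (a - b * theta67) =
    (a - 4 * b : ℤ) + (a - 7 * b : ℤ) * s67 + (a - 8 * b : ℤ) * s67 ^ 2 by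
      rw [val_unitK67, theta67]
      push_cast
      linear_combination (-b * (s67 + 4) : 𝓞 K67) * s67_pow_three] at h
  exact Int.not_even_iff_odd.mpr (ha.sub_even (hb.mul_left 7)) (even_coord_of_isSquare_K67 h)

theorem isSquare_sub_mul_theta67 {a b c : ℤ} (ha : Odd a) (hb : Even b) (hc : IsCoprime b c)
    (h : a ^ 3 + 2 * a ^ 2 * b - 48 * a * b ^ 2 - 166 * b ^ 3 = c ^ 2) :
    IsSquare (a - b * theta67 : 𝓞 K67) := by
  have hnorm : Algebra.norm ℤ (a - b * theta67 : 𝓞 K67) = c ^ 2 := by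
    rw [norm_sub_mul_theta67, h]
  obtain ⟨β, u, hβ⟩ := exists_sq_mul_unit_eq adjoin_theta67 hc hnorm
  have hu : Algebra.norm ℤ (u : 𝓞 K67) = 1 := by
    have hprod : Algebra.norm ℤ β ^ 2 * Algebra.norm ℤ (u : 𝓞 K67) = c ^ 2 := by
      rw [← map_pow, ← map_mul, hβ, hnorm]
    refine (Int.isUnit_iff.mp (u.isUnit.map (Algebra.norm ℤ))).resolve_right fun hneg => ?_
    have hc0 : c = 0 := by
      rw [hneg] at hprod
      nlinarith [sq_nonneg (Algebra.norm ℤ β)]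
    rw [hc0, isCoprime_zero_right, Int.isUnit_iff] at hc
    rcases hc with rfl | rfl <;> revert hb <;> decide
  obtain ⟨η, hη⟩ := exists_forall_norm_eq_one_mem_zpowers (K := K67)
    (by rw [finrank_K67]; decide) units_rank_K67
  rcases isSquare_or_isSquare_mul_of_mem_zpowers (hη u hu) (hη _ norm_unitK67)
    not_isSquare_unitK67 with hsq | hsq
  · rw [← hβ]
    exact (IsSquare.sq β).mul (hsq.map (Units.coeHom (𝓞 K67)))
  · refine absurd ?_ (not_isSquare_unitK67_mul ha hb)
    rw [← hβ, mul_left_comm]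
    exact (IsSquare.sq β).mul (hsq.map (Units.coeHom (𝓞 K67)))

theorem exists_den_eq_sq_and_den_eq_cube {f g : ℤ[X]} (hf : f.Monic) (hf3 : f.natDegree = 3)
    (hg : g.Monic) (hg2 : g.natDegree = 2) {x y : ℚ} (h : aeval y g = aeval x f) :
    ∃ d, x.den = d ^ 2 ∧ y.den = d ^ 3 := by
  refine exists_eq_sq_and_eq_cube x.den_nz ?_
  rw [← hg2, ← hf3, ← den_aeval_of_monic hg, ← den_aeval_of_monic hf, h]

theorem equation_E67_iff {x y : ℚ} :
    E67.toAffine.Equation x y ↔ y ^ 2 + y = x ^ 3 + x ^ 2 - 12 * x - 21 := by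
  rw [WeierstrassCurve.Affine.equation_iff]
  simp only [E67]
  constructor <;> intro h <;> linear_combination h

theorem exists_num_equation_E67 {x y : ℚ} (h : E67.toAffine.Equation x y) :
    ∃ (d : ℕ) (m : ℤ), x.den = d ^ 2 ∧ m ^ 2 + m * d ^ 3 =
      x.num ^ 3 + x.num ^ 2 * d ^ 2 - 12 * x.num * d ^ 4 - 21 * d ^ 6 := by
  have hcurve := equation_E67_iff.mp h
  obtain ⟨d, hx, hy⟩ := exists_den_eq_sq_and_den_eq_cube (x := x) (y := y)
    (f := X ^ 3 + X ^ 2 - 12 * X - 21) (g := X ^ 2 + X) (by monicity!) (by compute_degree!)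
    (by monicity!) (by compute_degree!)
    (by simpa only [map_add, map_sub, map_mul, map_pow, aeval_X, map_ofNat] using hcurve)
  refine ⟨d, y.num, hx, ?_⟩
  have hd : (d : ℚ) ≠ 0 := fun hd => x.den_nz (by rw [hx, Nat.cast_eq_zero.mp hd]; rfl)
  rw [← Rat.num_div_den x, ← Rat.num_div_den y, hx, hy] at hcurve
  push_cast at hcurve
  field_simp at hcurve
  have : (y.num ^ 2 + y.num * d ^ 3 : ℚ) =
      x.num ^ 3 + x.num ^ 2 * d ^ 2 - 12 * x.num * d ^ 4 - 21 * d ^ 6 := by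
    linear_combination hcurve
  exact_mod_cast this

theorem even_of_num_equation_E67 {m n d : ℤ}
    (h : m ^ 2 + m * d ^ 3 = n ^ 3 + n ^ 2 * d ^ 2 - 12 * n * d ^ 4 - 21 * d ^ 6) : Even d := by
  by_contra hd
  have hparity := congrArg Even h
  simp only [Int.even_add, Int.even_sub, Int.even_mul, Int.even_pow, hd, ne_eq,
    OfNat.ofNat_ne_zero, not_false_eq_true, and_true, or_false, true_iff, eq_iff_iff] at hparity
  tauto

theorem exists_coord_of_isSquare_sub_mul_theta67 {a e : ℤ}
    (h : IsSquare (a - (2 * e ^ 2 : ℤ) * theta67 : 𝓞 K67)) :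
    ∃ p q r : ℤ, p ^ 2 + 4 * q * r + 4 * r ^ 2 = a + 8 * e ^ 2 ∧
      p * q + 2 * q * r + 3 * r ^ 2 = -e ^ 2 ∧
      q ^ 2 + 2 * p * r + 4 * q * r + 6 * r ^ 2 = -2 * e ^ 2 := by
  obtain ⟨β, hβ⟩ := h
  obtain ⟨p, q, r, rfl⟩ := exists_coord_K67 β
  rw [← sq, sq_coord_K67, show (a - (2 * e ^ 2 : ℤ) * theta67 : 𝓞 K67) = (a + 8 * e ^ 2 : ℤ) +
    (-2 * e ^ 2 : ℤ) * s67 + (-2 * e ^ 2 : ℤ) * s67 ^ 2 by rw [theta67]; push_cast; ring] at hβ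
  obtain ⟨h0, h1, h2⟩ := coord_unique_K67 hβ
  exact ⟨p, q, r, h0.symm, by linarith, h2.symm⟩

theorem exists_sq_eq_of_equation_E67 {x y : ℚ} (h : E67.toAffine.Equation x y) :
    ∃ e c : ℤ, (x.den : ℤ) = 4 * e ^ 2 ∧ IsCoprime (2 * e ^ 2) c ∧
      x.num ^ 3 + 2 * x.num ^ 2 * (2 * e ^ 2) - 48 * x.num * (2 * e ^ 2) ^ 2 -
        166 * (2 * e ^ 2) ^ 3 = c ^ 2 := by
  obtain ⟨d, m, hden, hm⟩ := exists_num_equation_E67 h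
  obtain ⟨e, he⟩ := (even_of_num_equation_E67 hm).two_dvd
  have hden' : (x.den : ℤ) = 4 * e ^ 2 := by
    rw [hden, Nat.cast_pow, he]
    ring
  have hc : x.num ^ 3 + 2 * x.num ^ 2 * (2 * e ^ 2) - 48 * x.num * (2 * e ^ 2) ^ 2 -
      166 * (2 * e ^ 2) ^ 3 = (m + 4 * e ^ 3) ^ 2 := by
    rw [he] at hm
    linear_combination -hm
  refine ⟨e, m + 4 * e ^ 3, hden', .symm ((IsCoprime.pow_left_iff zero_lt_two).mp ?_), hc⟩
  have hnum : IsCoprime (x.num ^ 3) (2 * e ^ 2) :=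
    (x.isCoprime_num_den.of_isCoprime_of_dvd_right ⟨2, by rw [hden']; ring⟩).pow_left
  rw [← hc, show x.num ^ 3 + 2 * x.num ^ 2 * (2 * e ^ 2) - 48 * x.num * (2 * e ^ 2) ^ 2 -
    166 * (2 * e ^ 2) ^ 3 = x.num ^ 3 + 2 * e ^ 2 *
      (2 * x.num ^ 2 - 48 * x.num * (2 * e ^ 2) - 166 * (2 * e ^ 2) ^ 2) by ring]
  exact hnum.add_mul_left_left _

theorem exists_sqrt_coord_of_equation_E67 {x y : ℚ} (h : E67.toAffine.Equation x y) :
    ∃ e p q r : ℤ, (x.den : ℤ) = 4 * e ^ 2 ∧ Odd p ∧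
      p * q + 2 * q * r + 3 * r ^ 2 = -e ^ 2 ∧ q ^ 2 = 2 * p * (q - r) := by
  obtain ⟨e, c, hden, hcop, hc⟩ := exists_sq_eq_of_equation_E67 h
  have hodd : Odd x.num := Int.isCoprime_two_right.mp <|
    x.isCoprime_num_den.of_isCoprime_of_dvd_right ⟨2 * e ^ 2, by rw [hden]; ring⟩
  obtain ⟨p, q, r, h0, h1, h2⟩ := exists_coord_of_isSquare_sub_mul_theta67
    (isSquare_sub_mul_theta67 hodd (even_two_mul _) hcop hc)
  have hsq : p ^ 2 = x.num + 2 * (4 * e ^ 2 - 2 * q * r - 2 * r ^ 2) := by linarith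
  have hp : Odd p := (Int.odd_pow' two_ne_zero).mp (hsq ▸ hodd.add_even (even_two_mul _))
  exact ⟨e, p, q, r, hden, hp, h1, by linear_combination h2 - 2 * h1⟩

/-- These are the coordinates of a point whose double has the `x`-coordinate determined by
`4 * e ^ 2 * x - 2 * e ^ 2 * theta67 = (p + q * s67 + r * s67 ^ 2) ^ 2`. -/
theorem equation_E67_of_sqrt_coord {e p q r : ℤ} (hq : q ≠ 0)
    (he : p * q + 2 * q * r + 3 * r ^ 2 = -e ^ 2) (hpqr : q ^ 2 = 2 * p * (q - r)) :
    E67.toAffine.Equation (-p / q - 2 : ℚ) (p * e / q ^ 2 - 1 / 2) := by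
  have hq' : (q : ℚ) ≠ 0 := Int.cast_ne_zero.mpr hq
  have he' : (p * q + 2 * q * r + 3 * r ^ 2 : ℚ) = -e ^ 2 := by exact_mod_cast he
  have hpqr' : (q ^ 2 : ℚ) = 2 * p * (q - r) := by exact_mod_cast hpqr
  have hquartic : (4 * p ^ 2 * e ^ 2 : ℚ) =
      -q * (4 * p ^ 3 + 20 * p ^ 2 * q - 16 * p * q ^ 2 + 3 * q ^ 3) := by
    linear_combination
      4 * p ^ 2 * he' - (4 * p * q + 3 * (2 * p * q - q ^ 2 + 2 * p * r)) * hpqr'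
  rw [equation_E67_iff]
  field_simp
  linear_combination hquartic

theorem dvd_sq_mul_sq_of_sqrt_coord {e p q r : ℤ}
    (he : p * q + 2 * q * r + 3 * r ^ 2 = -e ^ 2) (hpqr : q ^ 2 = 2 * p * (q - r)) :
    q ∣ p ^ 2 * e ^ 2 := by
  obtain ⟨t, rfl⟩ : 2 ∣ q :=
    Int.prime_two.dvd_of_dvd_pow ⟨p * (q - r), by rw [hpqr]; ring⟩
  obtain ⟨k, hk⟩ : 2 * t ∣ p * r := ⟨p - t, by linarith⟩
  exact ⟨-p ^ 3 - 2 * p ^ 2 * r - 3 * k * p * r, by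
    linear_combination p ^ 2 * he - 3 * p * r * hk⟩

theorem exists_four_mul_den_dvd_of_equation_E67 {x y : ℚ} (h : E67.toAffine.Equation x y) :
    ∃ x₁ y₁ : ℚ, E67.toAffine.Equation x₁ y₁ ∧
      ∃ m : ℤ, Odd m ∧ (4 * x₁.den : ℤ) ∣ m * x.den := by
  obtain ⟨e, p, q, r, hden, hp, he, hpqr⟩ := exists_sqrt_coord_of_equation_E67 h
  have hq : q ≠ 0 := by
    rintro rfl
    have hp0 : p ≠ 0 := by rintro rfl; exact Int.not_odd_zero hp
    have hr : r = 0 := by simpa [hp0] using hpqr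
    have he0 : e = 0 := by simpa [hr] using he
    exact x.den_nz (by simpa only [he0, ne_eq, OfNat.ofNat_ne_zero, not_false_eq_true, zero_pow,
      mul_zero, Nat.cast_eq_zero] using hden)
  refine ⟨_, _, equation_E67_of_sqrt_coord hq he hpqr, p ^ 2, hp.pow, ?_⟩
  have hx : (-p / q - 2 : ℚ) = Rat.divInt (-p - 2 * q) q := by
    have hq' : (q : ℚ) ≠ 0 := Int.cast_ne_zero.mpr hq
    rw [Rat.divInt_eq_div]
    field_simp
    push_cast
    ring
  rw [hden, hx, mul_left_comm]
  exact mul_dvd_mul_left 4 ((Rat.den_dvd _ q).trans (dvd_sq_mul_sq_of_sqrt_coord he hpqr))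

theorem four_pow_dvd_den_of_equation_E67 (k : ℕ) {x y : ℚ} (h : E67.toAffine.Equation x y) :
    4 ^ k ∣ x.den := by
  induction k generalizing x y with
  | zero => exact one_dvd _
  | succ k ih =>
    obtain ⟨x₁, y₁, h₁, m, hm, hdvd⟩ := exists_four_mul_den_dvd_of_equation_E67 h
    have hmul : (4 ^ (k + 1) : ℤ) ∣ m * x.den := by
      rw [pow_succ']
      exact (mul_dvd_mul_left 4 (by exact_mod_cast ih h₁)).trans hdvd
    have hcop : IsCoprime (4 ^ (k + 1) : ℤ) m := by
      rw [show (4 : ℤ) = 2 ^ 2 by rfl]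
      exact (Int.isCoprime_two_left.mpr hm).pow_left.pow_left
    exact_mod_cast hcop.dvd_of_dvd_mul_left hmul

theorem not_equation_E67 (x y : ℚ) : ¬E67.toAffine.Equation x y := fun h =>
  (Nat.le_of_dvd x.den_pos (four_pow_dvd_den_of_equation_E67 x.den h)).not_gt
    (Nat.lt_pow_self (by decide))

/-- the Mordell–Weil group of `y² + y = x³ + x² - 12x - 21` over `ℚ` is trivial:
the point at infinity is the only rational point. -/
theorem stmt_18 (P : E67.toAffine.Point) : P = 0 := by
  rcases P with _ | ⟨x, y, h⟩
  · rfl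
  · exact absurd h.1 (not_equation_E67 x y)
end
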